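/- arXiv:2505.15119 — 4 statements merged into one kernel-verified Lean document; each statement's English description precedes it below -/
import Mathlib

section
/- (Ishii–Lions lemma / theorem on sums.) Let Ω ⊂ ℝⁿ be open, u, v ∈ C(Ω), and let φ : ℝⁿ → ℝ be C². Assume (x̄,ȳ) ∈ Ω×Ω is a local maximum point of the function (x,y) ↦ u(x) − v(y) − φ(x−y) on Ω×Ω. Set z = Dφ(x̄−ȳ) and Z = D²φ(x̄−ȳ). Then for every ε > 0 such that εZ < I (i.e. I − εZ is positive definite), there exist X, Y ∈ S(n) such that (z,X) ∈ J̄^{2,+}_Ω u(x̄), (z,Y) ∈ J̄^{2,−}_Ω v(ȳ), and, in the Loewner order on 2n×2n symmetric matrices, −(2/ε)·[[I,0],[0,I]] ≤ [[X,0],[0,−Y]] ≤ [[Z^ε,−Z^ε],[−Z^ε,Z^ε]], where Z^ε = (I−εZ)^{−1}Z. -/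
open Metric Set Filter

open scoped RealInnerProductSpace Topology

/-- The quadratic form `⟨Xh, h⟩` of a matrix `X` at `h`. -/
noncomputable def quadForm {n : ℕ} (X : Matrix (Fin n) (Fin n) ℝ)
    (h : EuclideanSpace ℝ (Fin n)) : ℝ :=
  ∑ i, ∑ j, X i j * h j * h i

/-- `(p, X)` belongs to the second-order superjet `J^{2,+}_Ω u (x)`. -/
def InSuperJet {n : ℕ} (Ω : Set (EuclideanSpace ℝ (Fin n))) (u : EuclideanSpace ℝ (Fin n) → ℝ)
    (x p : EuclideanSpace ℝ (Fin n)) (X : Matrix (Fin n) (Fin n) ℝ) : Prop :=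
  ∀ ε : ℝ, 0 < ε → ∃ δ : ℝ, 0 < δ ∧ ∀ h : EuclideanSpace ℝ (Fin n),
    x + h ∈ Ω → ‖h‖ < δ →
      u (x + h) ≤ u x + ⟪p, h⟫ + (1 / 2) * quadForm X h + ε * ‖h‖ ^ 2

/-- `(p, X)` belongs to the second-order subjet `J^{2,-}_Ω u (x)`. -/
def InSubJet {n : ℕ} (Ω : Set (EuclideanSpace ℝ (Fin n))) (u : EuclideanSpace ℝ (Fin n) → ℝ)
    (x p : EuclideanSpace ℝ (Fin n)) (X : Matrix (Fin n) (Fin n) ℝ) : Prop :=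
  ∀ ε : ℝ, 0 < ε → ∃ δ : ℝ, 0 < δ ∧ ∀ h : EuclideanSpace ℝ (Fin n),
    x + h ∈ Ω → ‖h‖ < δ →
      u x + ⟪p, h⟫ + (1 / 2) * quadForm X h - ε * ‖h‖ ^ 2 ≤ u (x + h)

/-- `(p, X)` belongs to the closed superjet `J̄^{2,+}_Ω u (x)`. -/
def InClosedSuperJet {n : ℕ} (Ω : Set (EuclideanSpace ℝ (Fin n)))
    (u : EuclideanSpace ℝ (Fin n) → ℝ) (x p : EuclideanSpace ℝ (Fin n))
    (X : Matrix (Fin n) (Fin n) ℝ) : Prop :=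
  ∃ (xs ps : ℕ → EuclideanSpace ℝ (Fin n)) (Xs : ℕ → Matrix (Fin n) (Fin n) ℝ),
    (∀ k, xs k ∈ Ω ∧ InSuperJet Ω u (xs k) (ps k) (Xs k)) ∧
    Tendsto xs atTop (𝓝 x) ∧ Tendsto (fun k => u (xs k)) atTop (𝓝 (u x)) ∧
    Tendsto ps atTop (𝓝 p) ∧ Tendsto Xs atTop (𝓝 X)

/-- `(p, X)` belongs to the closed subjet `J̄^{2,-}_Ω u (x)`. -/
def InClosedSubJet {n : ℕ} (Ω : Set (EuclideanSpace ℝ (Fin n)))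
    (u : EuclideanSpace ℝ (Fin n) → ℝ) (x p : EuclideanSpace ℝ (Fin n))
    (X : Matrix (Fin n) (Fin n) ℝ) : Prop :=
  ∃ (xs ps : ℕ → EuclideanSpace ℝ (Fin n)) (Xs : ℕ → Matrix (Fin n) (Fin n) ℝ),
    (∀ k, xs k ∈ Ω ∧ InSubJet Ω u (xs k) (ps k) (Xs k)) ∧
    Tendsto xs atTop (𝓝 x) ∧ Tendsto (fun k => u (xs k)) atTop (𝓝 (u x)) ∧
    Tendsto ps atTop (𝓝 p) ∧ Tendsto Xs atTop (𝓝 X)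

noncomputable def hessianMatrix {n : ℕ} (ψ : EuclideanSpace ℝ (Fin n) → ℝ)
    (x : EuclideanSpace ℝ (Fin n)) : Matrix (Fin n) (Fin n) ℝ :=
  Matrix.of fun i j =>
    iteratedFDeriv ℝ 2 ψ x ![EuclideanSpace.single i 1, EuclideanSpace.single j 1]

/-!
Replace `u` by its sup-convolution with a paraboloid. The result is semiconvex, and after adding a
quadratic the point realizing the supremum is a subgradient. Adding the identity to this subgradient
map gives a map with a Lipschitz inverse, so Rademacher's theorem yields, arbitrarily close to a
maximum point, points touched from above by a fixed quadratic at which the subgradient map is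
differentiable; there the sup-convolution has a second-order expansion (Jensen, Aleksandrov). The
sup-convolution transfers this expansion, unchanged, into a superjet of `u` at the point realizing
the supremum. Convolving a quadratic form `Z` with the paraboloid replaces it by `(1 - λ Z)⁻¹ Z`,
which is the upper bound, while semiconvexity with constant `λ⁻¹` is the lower one. These bounds
survive the passage to the limit by compactness.

For `u x - v y - φ (x - y)` the quadratic form is `D* Z D` with `D (x, y) = x - y`. Since
`D D* = 2`, the choice `λ = ε / 2` gives `(1 - λ D* Z D)⁻¹ D* Z D = D* (1 - ε Z)⁻¹ Z D`.
-/

section Subgradient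

variable {F : Type*} [NormedAddCommGroup F] [InnerProductSpace ℝ F]

/-- `p` is a subgradient of `g` at `x` in the sense of convex analysis: the affine function of
slope `p` that agrees with `g` at `x` supports `g` from below on the whole space. -/
def HasSubgradientAt (g : F → ℝ) (p x : F) : Prop :=
  ∀ y, g x + ⟪p, y - x⟫ ≤ g y

variable {g : F → ℝ} {s : F → F}

theorem HasSubgradientAt.inner_sub_nonneg {p q x y : F} (hp : HasSubgradientAt g p x)
    (hq : HasSubgradientAt g q y) : 0 ≤ ⟪p - q, x - y⟫ := by
  have hxy := hp y
  have hyx := hq x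
  rw [← neg_sub x y, inner_neg_right] at hxy
  rw [inner_sub_left]
  linarith

theorem HasSubgradientAt.norm_sub_le_norm_add_sub_add {p q x y : F} (hp : HasSubgradientAt g p x)
    (hq : HasSubgradientAt g q y) : ‖x - y‖ ≤ ‖(x + p) - (y + q)‖ := by
  refine le_of_sq_le_sq ?_ (norm_nonneg _)
  rw [add_sub_add_comm, norm_add_sq_real, real_inner_comm]
  nlinarith [hp.inner_sub_nonneg hq, sq_nonneg ‖p - q‖]

theorem convexOn_of_hasSubgradientAt (hs : ∀ x, HasSubgradientAt g (s x) x) :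
    ConvexOn ℝ univ g := by
  refine ⟨convex_univ, fun x _ y _ a b ha hb hab => ?_⟩
  set w := a • x + b • y
  have hx := mul_le_mul_of_nonneg_left (hs w x) ha
  have hy := mul_le_mul_of_nonneg_left (hs w y) hb
  have hw : a * ⟪s w, x - w⟫ + b * ⟪s w, y - w⟫ = 0 := by
    rw [← inner_smul_right, ← inner_smul_right, ← inner_add_right, smul_sub, smul_sub,
      sub_add_sub_comm, ← add_smul, hab, one_smul, sub_self, inner_zero_right]
  calc g w = a * g w + b * g w := by rw [← add_mul, hab, one_mul]
    _ ≤ a * g x + b * g y := by linarith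

theorem continuous_of_hasSubgradientAt [FiniteDimensional ℝ F]
    (hs : ∀ x, HasSubgradientAt g (s x) x) : Continuous g :=
  continuousOn_univ.1 ((convexOn_of_hasSubgradientAt hs).continuousOn isOpen_univ)

theorem HasSubgradientAt.norm_sub_le {x₀ p₀ x p : F} {C : ℝ} (hC : 0 < C)
    (hp : HasSubgradientAt g p x) (hp₀ : g x₀ + ⟪p₀, x - x₀⟫ ≤ g x)
    (hle : ∀ h, g (x₀ + h) ≤ g x₀ + ⟪p₀, h⟫ + C / 2 * ‖h‖ ^ 2) :
    ‖p - p₀‖ ≤ 2 * C * ‖x - x₀‖ := by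
  set d := p - p₀
  set h := C⁻¹ • d
  have hgx : g x + ⟪p, h - (x - x₀)⟫ ≤ g (x₀ + h) := by
    simpa only [show x₀ + h - x = h - (x - x₀) by abel] using hp (x₀ + h)
  have hgh := hle h
  have hinner : ⟪p, h - (x - x₀)⟫ = ⟪d, h⟫ - ⟪d, x - x₀⟫ + ⟪p₀, h⟫ - ⟪p₀, x - x₀⟫ := by
    simp only [d, inner_sub_left, inner_sub_right]; ring
  have hdh : ⟪d, h⟫ = C⁻¹ * ‖d‖ ^ 2 := by rw [inner_smul_right, real_inner_self_eq_norm_sq]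
  have hh : C / 2 * ‖h‖ ^ 2 = C⁻¹ * ‖d‖ ^ 2 / 2 := by
    rw [norm_smul, Real.norm_of_nonneg (by positivity)]; field_simp
  have hdx := real_inner_le_norm d (x - x₀)
  have hkey : C⁻¹ * ‖d‖ * ‖d‖ ≤ 2 * ‖x - x₀‖ * ‖d‖ := by nlinarith
  rcases (norm_nonneg d).eq_or_lt with hd | hd
  · rw [← hd]; positivity
  · have := le_of_mul_le_mul_right hkey hd
    rw [inv_mul_le_iff₀ hC] at this
    linarith

theorem inner_apply_self_le_opNorm_mul_sq (B : F →L[ℝ] F) (h : F) : ⟪B h, h⟫ ≤ ‖B‖ * ‖h‖ ^ 2 :=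
  calc ⟪B h, h⟫ ≤ ‖B h‖ * ‖h‖ := real_inner_le_norm _ _
    _ ≤ ‖B‖ * ‖h‖ * ‖h‖ := by gcongr; exact B.le_opNorm h
    _ = ‖B‖ * ‖h‖ ^ 2 := by ring

theorem HasSubgradientAt.eq_of_touching_above {B : F →L[ℝ] F} {x p q : F}
    (hp : HasSubgradientAt g p x) (hle : ∀ h, g (x + h) ≤ g x + ⟪q, h⟫ + 1 / 2 * ⟪B h, h⟫) :
    p = q := by
  have hbound := hp.norm_sub_le (x₀ := x) (p₀ := q) (C := ‖B‖ + 1) (by positivity) (by simp)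
    fun h => by linarith [hle h, inner_apply_self_le_opNorm_mul_sq B h, sq_nonneg ‖h‖]
  rw [sub_self, norm_zero, mul_zero] at hbound
  exact sub_eq_zero.1 (norm_le_zero_iff.1 hbound)

theorem norm_id_add_subgradient_sub_le_of_touching_above (hs : ∀ x, HasSubgradientAt g (s x) x)
    {B : F →L[ℝ] F} {x : F} (hle : ∀ h, g (x + h) ≤ g x + ⟪s x, h⟫ + 1 / 2 * ⟪B h, h⟫) (y : F) :
    ‖(y + s y) - (x + s x)‖ ≤ (1 + 2 * (‖B‖ + 1)) * ‖y - x‖ := by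
  have hbound := (hs y).norm_sub_le (C := ‖B‖ + 1) (by positivity) (hs x y)
    fun h => by linarith [hle h, inner_apply_self_le_opNorm_mul_sq B h, sq_nonneg ‖h‖]
  calc ‖(y + s y) - (x + s x)‖ = ‖(y - x) + (s y - s x)‖ := by rw [add_sub_add_comm]
    _ ≤ ‖y - x‖ + ‖s y - s x‖ := norm_add_le _ _
    _ ≤ (1 + 2 * (‖B‖ + 1)) * ‖y - x‖ := by linarith

theorem le_of_inner_subgradient_segment_le [FiniteDimensional ℝ F]
    (hs : ∀ x, HasSubgradientAt g (s x) x) {x h : F} {a b : ℝ}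
    (hle : ∀ t ∈ Icc (0 : ℝ) 1, ⟪s (x + t • h), h⟫ ≤ a + t * b) :
    g (x + h) ≤ g x + a + 1 / 2 * b := by
  have hcont : Continuous fun t : ℝ => g (x + t • h) :=
    (continuous_of_hasSubgradientAt hs).comp (by fun_prop)
  have hderiv (t : ℝ) : HasDerivAt (fun t => g x + t * a + t ^ 2 / 2 * b) (a + t * b) t := by
    have := (((hasDerivAt_id t).mul_const a).const_add (g x)).add
      ((((hasDerivAt_id t).pow 2).div_const 2).mul_const b)
    exact this.congr_deriv (by simp)
  have hslope : ∀ t ∈ Ico (0 : ℝ) 1, ∀ r, a + t * b < r →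
      ∃ᶠ z in 𝓝[>] t, slope (fun t => g (x + t • h)) t z < r := by
    intro t ht r hr
    have hnear : ∀ᶠ z in 𝓝[>] t, a + z * b < r :=
      nhdsWithin_le_nhds ((by fun_prop : ContinuousAt (fun z : ℝ => a + z * b) t).eventually_lt
        continuousAt_const hr)
    refine Eventually.frequently ?_
    filter_upwards [hnear, Ioo_mem_nhdsGT ht.2] with z hz htz
    refine lt_of_le_of_lt ?_ ((hle z ⟨ht.1.trans htz.1.le, htz.2.le⟩).trans_lt hz)
    have hsub := hs (x + z • h) (x + t • h)
    rw [add_sub_add_left_eq_sub, ← sub_smul, inner_smul_right] at hsub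
    rw [slope_def_field, div_le_iff₀ (sub_pos.2 htz.1)]
    linarith
  have := image_le_of_liminf_slope_right_le_deriv_boundary hcont.continuousOn (by simp)
    (fun t _ => (hderiv t).continuousAt.continuousWithinAt)
    (fun t _ => (hderiv t).hasDerivWithinAt) hslope (right_mem_Icc.2 zero_le_one)
  simp only [one_smul] at this
  linarith

theorem le_of_le_inner_subgradient_segment [FiniteDimensional ℝ F]
    (hs : ∀ x, HasSubgradientAt g (s x) x) {x h : F} {a b : ℝ}
    (hle : ∀ t ∈ Icc (0 : ℝ) 1, a + t * b ≤ ⟪s (x + t • h), h⟫) :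
    g x + a + 1 / 2 * b ≤ g (x + h) := by
  have hrev := le_of_inner_subgradient_segment_le hs (x := x + h) (h := -h) (a := -a - b) (b := b)
    fun t ht => by
      have := hle (1 - t) ⟨by linarith [ht.2], by linarith [ht.1]⟩
      rw [show x + h + t • -h = x + (1 - t) • h by module, inner_neg_right]
      linarith
  rw [add_neg_cancel_right] at hrev
  linarith

theorem abs_inner_sub_le_of_hasFDerivAt {M : F →L[ℝ] F} {x : F} (hM : HasFDerivAt s M x) {κ : ℝ}
    (hκ : 0 < κ) : ∀ᶠ h in 𝓝 (0 : F), ∀ t ∈ Icc (0 : ℝ) 1,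
      |⟪s (x + t • h), h⟫ - (⟪s x, h⟫ + t * ⟪M h, h⟫)| ≤ κ * ‖h‖ ^ 2 := by
  obtain ⟨r, hr, hball⟩ := Metric.eventually_nhds_iff_ball.1
    ((hasFDerivAt_iff_isLittleO_nhds_zero.1 hM).def hκ)
  filter_upwards [ball_mem_nhds 0 hr] with h hh t ht
  have hth : ‖t • h‖ ≤ ‖h‖ := by
    rw [norm_smul, Real.norm_of_nonneg ht.1]
    exact mul_le_of_le_one_left (norm_nonneg h) ht.2
  have hrem := hball (t • h) (mem_ball_zero_iff.2 (hth.trans_lt (mem_ball_zero_iff.1 hh)))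
  rw [map_smul] at hrem
  calc |⟪s (x + t • h), h⟫ - (⟪s x, h⟫ + t * ⟪M h, h⟫)|
      = |⟪s (x + t • h) - s x - t • M h, h⟫| := by
        rw [inner_sub_left, inner_sub_left, real_inner_smul_left, sub_sub]
    _ ≤ ‖s (x + t • h) - s x - t • M h‖ * ‖h‖ := abs_real_inner_le_norm _ _
    _ ≤ κ * ‖h‖ * ‖h‖ := by gcongr; exact hrem.trans (by gcongr)
    _ = κ * ‖h‖ ^ 2 := by ring

theorem eventually_le_of_hasFDerivAt_subgradient [FiniteDimensional ℝ F]
    (hs : ∀ x, HasSubgradientAt g (s x) x) {M : F →L[ℝ] F} {x : F} (hM : HasFDerivAt s M x)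
    {κ : ℝ} (hκ : 0 < κ) :
    ∀ᶠ h in 𝓝 (0 : F), g (x + h) ≤ g x + ⟪s x, h⟫ + 1 / 2 * ⟪M h, h⟫ + κ * ‖h‖ ^ 2 := by
  filter_upwards [abs_inner_sub_le_of_hasFDerivAt hM hκ] with h hh
  have := le_of_inner_subgradient_segment_le hs (a := ⟪s x, h⟫ + κ * ‖h‖ ^ 2) (b := ⟪M h, h⟫)
    fun t ht => by linarith [(abs_le.1 (hh t ht)).2]
  linarith

theorem eventually_ge_of_hasFDerivAt_subgradient [FiniteDimensional ℝ F]
    (hs : ∀ x, HasSubgradientAt g (s x) x) {M : F →L[ℝ] F} {x : F} (hM : HasFDerivAt s M x)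
    {κ : ℝ} (hκ : 0 < κ) :
    ∀ᶠ h in 𝓝 (0 : F), g x + ⟪s x, h⟫ + 1 / 2 * ⟪M h, h⟫ - κ * ‖h‖ ^ 2 ≤ g (x + h) := by
  filter_upwards [abs_inner_sub_le_of_hasFDerivAt hM hκ] with h hh
  have := le_of_le_inner_subgradient_segment hs (a := ⟪s x, h⟫ - κ * ‖h‖ ^ 2) (b := ⟪M h, h⟫)
    fun t ht => by linarith [(abs_le.1 (hh t ht)).1]
  linarith

theorem inner_map_self_nonneg_of_eventually (A : F →L[ℝ] F)
    (hA : ∀ κ > 0, ∀ᶠ h in 𝓝 (0 : F), -(κ * ‖h‖ ^ 2) ≤ ⟪A h, h⟫) (h : F) : 0 ≤ ⟪A h, h⟫ := by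
  have hscaled (κ : ℝ) (hκ : 0 < κ) : -(κ * ‖h‖ ^ 2) ≤ ⟪A h, h⟫ := by
    have hsmall : Tendsto (fun t : ℝ => t • h) (𝓝[>] 0) (𝓝 0) := by
      simpa using ((continuous_id.smul continuous_const).tendsto (0 : ℝ)).mono_left
        (nhdsWithin_le_nhds (s := Ioi 0)) (f := fun t : ℝ => t • h)
    obtain ⟨t, hAt, ht⟩ := ((hsmall.eventually (hA κ hκ)).and self_mem_nhdsWithin).exists
    rw [map_smul, real_inner_smul_left, inner_smul_right, norm_smul, mul_pow, Real.norm_eq_abs,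
      sq_abs] at hAt
    have ht2 : 0 < t ^ 2 := pow_pos ht 2
    exact le_of_mul_le_mul_left (by linarith) ht2
  refine le_of_forall_pos_sub_le fun ρ hρ => ?_
  have := hscaled (ρ / (‖h‖ ^ 2 + 1)) (by positivity)
  have hle : ρ / (‖h‖ ^ 2 + 1) * ‖h‖ ^ 2 ≤ ρ := by
    rw [div_mul_eq_mul_div, div_le_iff₀ (by positivity)]
    nlinarith
  linarith

theorem inner_fderiv_subgradient_nonneg (hs : ∀ x, HasSubgradientAt g (s x) x)
    {M : F →L[ℝ] F} {x : F} (hM : HasFDerivAt s M x) (h : F) : 0 ≤ ⟪M h, h⟫ := by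
  refine inner_map_self_nonneg_of_eventually M (fun κ hκ => ?_) h
  filter_upwards [abs_inner_sub_le_of_hasFDerivAt hM hκ] with h hh
  have hmono := (hs (x + h)).inner_sub_nonneg (hs x)
  have hexp := (abs_le.1 (hh 1 (right_mem_Icc.2 zero_le_one))).2
  rw [add_sub_cancel_left, inner_sub_left] at hmono
  rw [one_smul] at hexp
  linarith

theorem inner_fderiv_subgradient_le_of_touching_above [FiniteDimensional ℝ F]
    (hs : ∀ x, HasSubgradientAt g (s x) x) {M B : F →L[ℝ] F} {x : F} (hM : HasFDerivAt s M x)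
    (hB : ∀ h, g (x + h) ≤ g x + ⟪s x, h⟫ + 1 / 2 * ⟪B h, h⟫) (h : F) :
    ⟪M h, h⟫ ≤ ⟪B h, h⟫ := by
  suffices 0 ≤ ⟪(B - M) h, h⟫ by
    rw [sub_apply, inner_sub_left] at this; linarith
  refine inner_map_self_nonneg_of_eventually (B - M) (fun κ hκ => ?_) h
  filter_upwards [eventually_ge_of_hasFDerivAt_subgradient hs hM (half_pos hκ)] with h hh
  rw [sub_apply, inner_sub_left]
  linarith [hB h]

end Subgradient

section Jensen

theorem surjective_fderiv_of_leftInverse {E F : Type*} [NormedAddCommGroup E] [NormedSpace ℝ E]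
    [NormedAddCommGroup F] [NormedSpace ℝ F] [FiniteDimensional ℝ E] {P : F → E} {Q : E → F}
    {L : F →L[ℝ] E} {x : E} {K : ℝ} (hPQ : Function.LeftInverse P Q)
    (hP : HasFDerivAt P L (Q x)) (hQ : ∀ y, ‖Q y - Q x‖ ≤ K * ‖y - x‖) :
    Function.Surjective L := by
  have hQcont : ContinuousAt Q x := continuousAt_of_locally_lipschitz one_pos K fun y _ => by
    simpa only [dist_eq_norm] using hQ y
  have hlittle : (fun y => y - x - L (Q y - Q x)) =o[𝓝 x] fun y => y - x := by
    have h := (hP.isLittleO.comp_tendsto hQcont).trans_isBigO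
      (Asymptotics.IsBigO.of_bound K (Eventually.of_forall hQ))
    simpa only [Function.comp_def, hPQ _] using h
  intro h
  suffices h ∈ closure (LinearMap.range (L : F →ₗ[ℝ] E) : Set E) by
    rwa [(Submodule.closed_of_finiteDimensional _).closure_eq] at this
  refine Metric.mem_closure_iff.2 fun r hr => ?_
  have hline : Tendsto (fun t : ℝ => x + t • h) (𝓝[>] 0) (𝓝 x) := by
    have : Continuous fun t : ℝ => x + t • h := by fun_prop
    simpa using (this.tendsto 0).mono_left nhdsWithin_le_nhds
  have hc : 0 < r / (‖h‖ + 1) := by positivity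
  obtain ⟨t, hbound, ht⟩ := ((hline.eventually (hlittle.def hc)).and self_mem_nhdsWithin).exists
  have ht : 0 < t := ht
  refine ⟨L (t⁻¹ • (Q (x + t • h) - Q x)), ⟨_, rfl⟩, ?_⟩
  rw [add_sub_cancel_left] at hbound
  have hscale : t • (h - L (t⁻¹ • (Q (x + t • h) - Q x))) = t • h - L (Q (x + t • h) - Q x) := by
    rw [map_smul, smul_sub, smul_inv_smul₀ ht.ne']
  rw [← hscale, norm_smul, norm_smul, Real.norm_of_nonneg ht.le] at hbound
  rw [dist_eq_norm]
  have : ‖h - L (t⁻¹ • (Q (x + t • h) - Q x))‖ ≤ r / (‖h‖ + 1) * ‖h‖ := by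
    refine le_of_mul_le_mul_left ?_ ht
    linarith
  refine this.trans_lt ?_
  rw [div_mul_eq_mul_div, div_lt_iff₀ (by positivity)]
  linarith

theorem differentiableAt_of_leftInverse {E : Type*} [NormedAddCommGroup E] [NormedSpace ℝ E]
    [FiniteDimensional ℝ E] {P Q : E → E} {x : E} {K : ℝ} (hPQ : Function.LeftInverse P Q)
    (hP : DifferentiableAt ℝ P (Q x)) (hQ : ∀ y, ‖Q y - Q x‖ ≤ K * ‖y - x‖) :
    DifferentiableAt ℝ Q x := by
  have hsurj := surjective_fderiv_of_leftInverse hPQ hP.hasFDerivAt hQ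
  let e : E ≃L[ℝ] E := (LinearEquiv.ofBijective (fderiv ℝ P (Q x) : E →ₗ[ℝ] E)
    ⟨LinearMap.injective_iff_surjective.2 hsurj, hsurj⟩).toContinuousLinearEquiv
  have he : (e : E →L[ℝ] E) = fderiv ℝ P (Q x) := by ext; rfl
  have hQcont : ContinuousAt Q x := continuousAt_of_locally_lipschitz one_pos K fun y _ => by
    simpa only [dist_eq_norm] using hQ y
  exact (HasFDerivAt.of_local_left_inverse (f' := e) hQcont (he ▸ hP.hasFDerivAt)
    (Eventually.of_forall hPQ)).differentiableAt

theorem dense_compl_image_not_differentiableAt {E F : Type*} [NormedAddCommGroup E]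
    [NormedSpace ℝ E] [FiniteDimensional ℝ E] [NormedAddCommGroup F] [NormedSpace ℝ F]
    [FiniteDimensional ℝ F] {P : E → F} {Ψ : E → E} {K C : NNReal}
    (hP : LipschitzWith K P) (hΨ : LipschitzWith C Ψ) :
    Dense (Ψ '' {z | ¬ DifferentiableAt ℝ P z})ᶜ := by
  borelize E
  let μ : MeasureTheory.Measure E := MeasureTheory.Measure.hausdorffMeasure (Module.finrank ℝ E)
  have hnull : μ {z | ¬ DifferentiableAt ℝ P z} = 0 := hP.ae_differentiableAt
  have himage : μ (Ψ '' {z | ¬ DifferentiableAt ℝ P z}) = 0 := by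
    refine le_antisymm ?_ zero_le
    calc μ (Ψ '' {z | ¬ DifferentiableAt ℝ P z})
        ≤ C ^ (Module.finrank ℝ E : ℝ) * μ {z | ¬ DifferentiableAt ℝ P z} :=
          hΨ.hausdorffMeasure_image_le (Nat.cast_nonneg _) _
      _ = 0 := by rw [hnull, mul_zero]
  exact MeasureTheory.Measure.dense_of_ae (μ := μ) (MeasureTheory.compl_mem_ae_iff.2 himage)

variable {F : Type*} [NormedAddCommGroup F] [InnerProductSpace ℝ F] [FiniteDimensional ℝ F]
  {g : F → ℝ} {s : F → F}

theorem exists_lipschitzWith_leftInverse_id_add (hs : ∀ x, HasSubgradientAt g (s x) x) :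
    ∃ (K : NNReal) (P : F → F), LipschitzWith K P ∧
      Function.LeftInverse P fun x => x + s x := by
  have hexp : AntilipschitzWith 1 fun x => x + s x := AntilipschitzWith.of_le_mul_dist fun x y => by
    simpa only [dist_eq_norm, NNReal.coe_one, one_mul] using
      (hs x).norm_sub_le_norm_add_sub_add (hs y)
  have hleft := Function.leftInverse_invFun hexp.injective
  have hlip : LipschitzOnWith 1 (Function.invFun fun x => x + s x) (range fun x => x + s x) := by
    rintro _ ⟨x, rfl⟩ _ ⟨y, rfl⟩
    simpa only [hleft _] using hexp x y
  obtain ⟨P, hP, heq⟩ := hlip.extend_finite_dimension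
  exact ⟨_, P, hP, fun x => (heq ⟨x, rfl⟩).symm.trans (hleft x)⟩

theorem exists_quadratic_touching_above (hg : Continuous g) (hg₀ : 0 ≤ g 0) {B : F →L[ℝ] F}
    (hB : (B : F →ₗ[ℝ] F).IsSymmetric) {η : ℝ} (hη : 0 < η)
    (hle : ∀ x, g x ≤ 1 / 2 * ⟪B x, x⟫ - η * ‖x‖ ^ 2) (p : F) :
    ∃ x₀, ‖x₀‖ ≤ ‖p‖ / η ∧
      ∀ h, g (x₀ + h) ≤ g x₀ + ⟪p + B x₀, h⟫ + 1 / 2 * ⟪B h, h⟫ := by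
  have := FiniteDimensional.proper ℝ F
  let G : F → ℝ := fun x => g x - 1 / 2 * ⟪B x, x⟫ - ⟪p, x⟫
  have hGcont : Continuous G := by fun_prop
  have hG₀ : 0 ≤ G 0 := by simpa [G] using hg₀
  have hGbound (x : F) (hx : 0 ≤ G x) : ‖x‖ ≤ ‖p‖ / η := by
    have hinner := (abs_le.1 (abs_real_inner_le_norm p x)).1
    have hsq : η * ‖x‖ * ‖x‖ ≤ ‖p‖ * ‖x‖ := by
      have := hle x
      simp only [G] at hx
      linarith
    rw [le_div_iff₀' hη]
    rcases (norm_nonneg x).eq_or_lt with hx₀ | hx₀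
    · rw [← hx₀, mul_zero]; exact norm_nonneg p
    · exact le_of_mul_le_mul_right hsq hx₀
  obtain ⟨x₀, -, hx₀⟩ := (isCompact_closedBall (0 : F) (‖p‖ / η)).exists_isMaxOn
    ⟨0, mem_closedBall_self (by positivity)⟩ hGcont.continuousOn
  have hGx₀ : 0 ≤ G x₀ := hG₀.trans (hx₀ (mem_closedBall_self (by positivity)))
  have hmax (y : F) : G y ≤ G x₀ := by
    by_cases hy : 0 ≤ G y
    · exact hx₀ (mem_closedBall_zero_iff.2 (hGbound y hy))
    · exact (not_le.1 hy).le.trans hGx₀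
  refine ⟨x₀, hGbound x₀ hGx₀, fun h => ?_⟩
  have hsymm : ⟪B h, x₀⟫ = ⟪B x₀, h⟫ := (hB h x₀).trans (real_inner_comm _ _)
  have := hmax (x₀ + h)
  simp only [G, map_add, inner_add_left, inner_add_right] at this ⊢
  linarith

theorem differentiableAt_subgradient_of_touching_above (hs : ∀ x, HasSubgradientAt g (s x) x)
    {P : F → F} (hPs : Function.LeftInverse P fun x => x + s x) {B : F →L[ℝ] F} {x : F}
    (hP : DifferentiableAt ℝ P (x + s x))
    (hle : ∀ h, g (x + h) ≤ g x + ⟪s x, h⟫ + 1 / 2 * ⟪B h, h⟫) : DifferentiableAt ℝ s x := by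
  have hadd := differentiableAt_of_leftInverse hPs hP
    (norm_id_add_subgradient_sub_le_of_touching_above hs hle)
  simpa only [id, add_sub_cancel_left] using hadd.fun_sub differentiableAt_id

theorem exists_differentiableAt_subgradient_touching_above
    (hs : ∀ x, HasSubgradientAt g (s x) x) (hg₀ : 0 ≤ g 0) {B : F →L[ℝ] F}
    (hB : (B : F →ₗ[ℝ] F).IsSymmetric) {η : ℝ} (hη : 0 < η)
    (hle : ∀ x, g x ≤ 1 / 2 * ⟪B x, x⟫ - η * ‖x‖ ^ 2) {δ : ℝ} (hδ : 0 < δ) :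
    ∃ x, ‖x‖ < δ ∧ ‖s x‖ < δ ∧ DifferentiableAt ℝ s x ∧
      ∀ h, g (x + h) ≤ g x + ⟪s x, h⟫ + 1 / 2 * ⟪B h, h⟫ := by
  obtain ⟨K, P, hP, hPs⟩ := exists_lipschitzWith_leftInverse_id_add hs
  have hΨ : LipschitzWith _ fun z => z - P z - B (P z) :=
    (LipschitzWith.id.sub hP).sub (B.lipschitz.comp hP)
  -- A point `x` touched above with slope `p + B x` has `p = Ψ (x + s x)`, where `Ψ` is the map in
  -- `hΨ`; so if `p` is not in the `Ψ`-image of the bad set, `P` is differentiable at `x + s x`.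
  obtain ⟨p, hpΨ, hp⟩ := (dense_compl_image_not_differentiableAt hP hΨ).exists_mem_open isOpen_ball
    ⟨0, mem_ball_self (show 0 < δ / (1 + (1 + ‖B‖) / η) by positivity)⟩
  rw [mem_ball_zero_iff, lt_div_iff₀ (by positivity)] at hp
  obtain ⟨x, hx, htouch⟩ := exists_quadratic_touching_above (continuous_of_hasSubgradientAt hs)
    hg₀ hB hη hle p
  have hsx : s x = p + B x := (hs x).eq_of_touching_above htouch
  rw [← hsx] at htouch
  have hPdiff : DifferentiableAt ℝ P (x + s x) := by
    by_contra hnd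
    refine hpΨ ⟨x + s x, hnd, ?_⟩
    beta_reduce
    rw [show P (x + s x) = x from hPs x, hsx]
    abel
  have hpη : ‖p‖ + ‖p‖ / η + ‖B‖ * (‖p‖ / η) < δ := by
    calc _ = ‖p‖ * (1 + (1 + ‖B‖) / η) := by ring
      _ < δ := hp
  have hBx : ‖B x‖ ≤ ‖B‖ * (‖p‖ / η) := (B.le_opNorm x).trans (by gcongr)
  have hsx_le : ‖s x‖ ≤ ‖p‖ + ‖B x‖ := hsx ▸ norm_add_le _ _
  have hp₀ : 0 ≤ ‖p‖ / η := by positivity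
  refine ⟨x, ?_, ?_, differentiableAt_subgradient_of_touching_above hs hPs hPdiff htouch, htouch⟩
  · linarith [norm_nonneg p, norm_nonneg (B x)]
  · linarith

end Jensen

section Superjet

variable {E : Type*} [NormedAddCommGroup E] [InnerProductSpace ℝ E]

/-- The pair `(p, X)` belongs to the second-order superjet of `u` at `x`. The operator `X` enters
only through its quadratic form, and is not required to be symmetric. -/
def HasSuperjetAt (u : E → ℝ) (p : E) (X : E →L[ℝ] E) (x : E) : Prop :=
  ∀ κ > 0, ∀ᶠ h in 𝓝 (0 : E), u (x + h) ≤ u x + ⟪p, h⟫ + 1 / 2 * ⟪X h, h⟫ + κ * ‖h‖ ^ 2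

/-- The pair `(p, X)` belongs to the closed second-order superjet of `u` at `x`: it is a limit of
superjets of `u` at points tending to `x`, along which the values of `u` tend to `u x`. -/
def HasClosedSuperjetAt (u : E → ℝ) (p : E) (X : E →L[ℝ] E) (x : E) : Prop :=
  ∃ (xs ps : ℕ → E) (Xs : ℕ → E →L[ℝ] E), (∀ k, HasSuperjetAt u (ps k) (Xs k) (xs k)) ∧
    Tendsto xs atTop (𝓝 x) ∧ Tendsto (fun k => u (xs k)) atTop (𝓝 (u x)) ∧
    Tendsto ps atTop (𝓝 p) ∧ Tendsto Xs atTop (𝓝 X)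

variable {u : E → ℝ} {p x : E} {X : E →L[ℝ] E}

theorem HasSuperjetAt.congr_inner_self {Y : E →L[ℝ] E} (hu : HasSuperjetAt u p X x)
    (hXY : ∀ h, ⟪Y h, h⟫ = ⟪X h, h⟫) : HasSuperjetAt u p Y x := by
  simpa only [HasSuperjetAt, hXY] using hu

theorem hasSuperjetAt_translate_iff {a b : E} {c : ℝ} :
    HasSuperjetAt (fun y => u (a + y) - c - ⟪b, y⟫) p X x ↔ HasSuperjetAt u (b + p) X (a + x) := by
  refine forall₂_congr fun κ _ => eventually_congr (Eventually.of_forall fun h => ?_)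
  simp only [inner_add_right, inner_add_left, ← add_assoc]
  constructor <;> intro hle <;> linarith

end Superjet

section Operator

variable {E : Type*} [NormedAddCommGroup E] [InnerProductSpace ℝ E]

theorem exists_pos_mul_norm_sq_le_inner [FiniteDimensional ℝ E] {A : E →L[ℝ] E}
    (hA : ∀ x ≠ 0, 0 < ⟪A x, x⟫) : ∃ c > 0, ∀ x, c * ‖x‖ ^ 2 ≤ ⟪A x, x⟫ := by
  have := FiniteDimensional.proper ℝ E
  rcases subsingleton_or_nontrivial E with hE | hE
  · exact ⟨1, one_pos, fun x => by simp [Subsingleton.elim x 0]⟩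
  obtain ⟨e, he, hmin⟩ := (isCompact_sphere (0 : E) 1).exists_isMinOn
    (NormedSpace.sphere_nonempty.2 zero_le_one)
    (by fun_prop : Continuous fun x => ⟪A x, x⟫).continuousOn
  refine ⟨⟪A e, e⟫, hA e (ne_zero_of_mem_unit_sphere ⟨e, he⟩), fun x => ?_⟩
  rcases eq_or_ne x 0 with rfl | hx
  · simp
  have hsphere : ‖x‖⁻¹ • x ∈ sphere (0 : E) 1 :=
    mem_sphere_zero_iff_norm.2 (norm_smul_inv_norm (𝕜 := ℝ) hx)
  have hle : ⟪A e, e⟫ ≤ ⟪A (‖x‖⁻¹ • x), ‖x‖⁻¹ • x⟫ := hmin hsphere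
  rw [map_smul, real_inner_smul_left, real_inner_smul_right] at hle
  calc ⟪A e, e⟫ * ‖x‖ ^ 2 ≤ ‖x‖⁻¹ * (‖x‖⁻¹ * ⟪A x, x⟫) * ‖x‖ ^ 2 := by gcongr
    _ = ⟪A x, x⟫ := by field_simp [norm_ne_zero_iff.2 hx]

theorem inner_add_smul_one_self (T : E →L[ℝ] E) (σ : ℝ) (h : E) :
    ⟪(T + σ • 1) h, h⟫ = ⟪T h, h⟫ + σ * ‖h‖ ^ 2 := by
  rw [add_apply, smul_apply, one_apply_eq_self, inner_add_left, real_inner_smul_left,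
    real_inner_self_eq_norm_sq]

theorem norm_le_of_abs_inner_self_le {X : E →L[ℝ] E} (hX : (X : E →ₗ[ℝ] E).IsSymmetric)
    {C : ℝ} (hC : 0 ≤ C) (hle : ∀ h, |⟪X h, h⟫| ≤ C * ‖h‖ ^ 2) : ‖X‖ ≤ C := by
  rw [X.norm_eq_iSup_rayleighQuotient hX]
  refine Real.iSup_le (fun h => ?_) hC
  rw [ContinuousLinearMap.rayleighQuotient, abs_div, abs_of_nonneg (sq_nonneg ‖h‖)]
  exact div_le_of_le_mul₀ (sq_nonneg _) hC (hle h)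

theorem exists_isSymmetric_inner_self_eq [CompleteSpace E] (M : E →L[ℝ] E) :
    ∃ X : E →L[ℝ] E, (X : E →ₗ[ℝ] E).IsSymmetric ∧ ∀ h, ⟪X h, h⟫ = ⟪M h, h⟫ := by
  refine ⟨(1 / 2 : ℝ) • (M + M.adjoint), fun x y => ?_, fun h => ?_⟩
  · simp only [ContinuousLinearMap.coe_coe, smul_apply, add_apply, real_inner_smul_left,
      real_inner_smul_right, inner_add_left, inner_add_right,
      ContinuousLinearMap.adjoint_inner_left, ContinuousLinearMap.adjoint_inner_right]
    ring
  · simp only [smul_apply, add_apply, real_inner_smul_left, inner_add_left,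
      ContinuousLinearMap.adjoint_inner_left, real_inner_comm (M h) h]
    ring

theorem isSymmetric_of_rightInverse {A T : E →L[ℝ] E} (hA : (A : E →ₗ[ℝ] E).IsSymmetric)
    (hAT : Function.RightInverse T A) : (T : E →ₗ[ℝ] E).IsSymmetric := fun x y =>
  calc ⟪T x, y⟫ = ⟪T x, A (T y)⟫ := by rw [hAT y]
    _ = ⟪A (T x), T y⟫ := (hA (T x) (T y)).symm
    _ = ⟪x, T y⟫ := by rw [hAT x]

theorem inner_sub_half_inner_eq {A T : E →L[ℝ] E} (hA : (A : E →ₗ[ℝ] E).IsSymmetric)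
    (hAT : Function.RightInverse T A) (y x : E) :
    ⟪y, x⟫ - 1 / 2 * ⟪A y, y⟫ =
      1 / 2 * ⟪T x, x⟫ - 1 / 2 * ⟪A (y - T x), y - T x⟫ := by
  have hcross : ⟪A y, T x⟫ = ⟪y, x⟫ := by
    rw [show ⟪A y, T x⟫ = ⟪y, A (T x)⟫ from hA y (T x), hAT x]
  rw [map_sub, hAT x, inner_sub_left, inner_sub_right, inner_sub_right, hcross,
    real_inner_comm x y, real_inner_comm (T x) x]
  ring

theorem add_inner_sub_half_inner_le {A T : E →L[ℝ] E} (hA : (A : E →ₗ[ℝ] E).IsSymmetric)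
    (hAT : Function.RightInverse T A) {c κ : ℝ} (hκ : 0 ≤ κ) (hκc : 4 * κ ≤ c)
    (hc : ∀ x, c * ‖x‖ ^ 2 ≤ ⟪A x, x⟫) (y x : E) :
    ⟪y, x⟫ - 1 / 2 * ⟪A y, y⟫ + κ * ‖y‖ ^ 2 ≤ 1 / 2 * ⟪T x, x⟫ + 2 * κ * ‖T‖ ^ 2 * ‖x‖ ^ 2 := by
  have hy : ‖y‖ ^ 2 ≤ 2 * ‖y - T x‖ ^ 2 + 2 * ‖T x‖ ^ 2 := by
    have := norm_add_le (y - T x) (T x)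
    rw [sub_add_cancel] at this
    nlinarith [norm_nonneg y, sq_nonneg (‖y - T x‖ - ‖T x‖)]
  have hT : ‖T x‖ ^ 2 ≤ ‖T‖ ^ 2 * ‖x‖ ^ 2 := by
    rw [← mul_pow]; gcongr; exact T.le_opNorm x
  rw [inner_sub_half_inner_eq hA hAT]
  nlinarith [hc (y - T x), mul_le_mul_of_nonneg_left hy hκ, mul_le_mul_of_nonneg_left hT hκ,
    mul_le_mul_of_nonneg_right hκc (sq_nonneg ‖y - T x‖)]

theorem rightInverse_one_add_smul {E : Type*} [NormedAddCommGroup E] [NormedSpace ℝ E]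
    {Z R : E →L[ℝ] E} {lam : ℝ} (hR : (1 - lam • Z) * R = Z) :
    Function.RightInverse (1 + lam • R : E →L[ℝ] E) (1 - lam • Z : E →L[ℝ] E) := fun x => by
  have hRx : R x - lam • Z (R x) = Z x := DFunLike.congr_fun hR x
  simp only [add_apply, sub_apply, smul_apply, one_apply_eq_self, map_add, map_smul]
  rw [← hRx]
  module

end Operator

section SupConvolution

variable {E : Type*} [NormedAddCommGroup E] {u : E → ℝ} {K : Set E} {lam : ℝ}

/-- The sup-convolution of `u` with the paraboloid of opening `1 / lam`, where the supremum runs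
over a set `K`; it is the largest value, hence not a junk value of `sSup`, when `K` is compact and
nonempty and `u` is continuous on `K`. -/
noncomputable def supConvolution (u : E → ℝ) (K : Set E) (lam : ℝ) (ξ : E) : ℝ :=
  sSup ((fun y => u y - ‖y - ξ‖ ^ 2 / (2 * lam)) '' K)

theorem exists_supConvolution_eq (hK : IsCompact K) (hne : K.Nonempty)
    (hu : ContinuousOn u K) (lam : ℝ) (ξ : E) :
    ∃ y ∈ K, supConvolution u K lam ξ = u y - ‖y - ξ‖ ^ 2 / (2 * lam) :=
  hK.exists_sSup_image_eq hne (by fun_prop)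

theorem le_supConvolution (hK : IsCompact K) (hu : ContinuousOn u K) {y : E} (hy : y ∈ K)
    (ξ : E) : u y - ‖y - ξ‖ ^ 2 / (2 * lam) ≤ supConvolution u K lam ξ :=
  le_csSup (hK.bddAbove_image (by fun_prop)) (mem_image_of_mem _ hy)

theorem self_le_supConvolution (hK : IsCompact K) (hu : ContinuousOn u K) {y : E} (hy : y ∈ K) :
    u y ≤ supConvolution u K lam y := by
  simpa using le_supConvolution (lam := lam) hK hu hy y

variable [InnerProductSpace ℝ E]

theorem mul_sub_norm_sq_div_add (hlam : lam ≠ 0) (a : ℝ) (y ξ : E) :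
    lam * (a - ‖y - ξ‖ ^ 2 / (2 * lam)) + 1 / 2 * ‖ξ‖ ^ 2 =
      lam * a - 1 / 2 * ‖y‖ ^ 2 + ⟪y, ξ⟫ := by
  rw [norm_sub_sq_real]
  field_simp
  ring

theorem hasSubgradientAt_supConvolution (hK : IsCompact K) (hu : ContinuousOn u K) (hlam : 0 < lam)
    {y ξ : E} (hy : y ∈ K) (hξ : supConvolution u K lam ξ = u y - ‖y - ξ‖ ^ 2 / (2 * lam)) :
    HasSubgradientAt (fun ξ => lam * supConvolution u K lam ξ + 1 / 2 * ‖ξ‖ ^ 2) y ξ := by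
  intro ζ
  calc lam * supConvolution u K lam ξ + 1 / 2 * ‖ξ‖ ^ 2 + ⟪y, ζ - ξ⟫
      = lam * (u y - ‖y - ζ‖ ^ 2 / (2 * lam)) + 1 / 2 * ‖ζ‖ ^ 2 := by
        rw [hξ, mul_sub_norm_sq_div_add hlam.ne', mul_sub_norm_sq_div_add hlam.ne',
          inner_sub_right]
        ring
    _ ≤ lam * supConvolution u K lam ζ + 1 / 2 * ‖ζ‖ ^ 2 := by
        gcongr; exact le_supConvolution hK hu hy ζ

theorem HasSuperjetAt.of_supConvolution (hK : IsCompact K) (hu : ContinuousOn u K) {y ξ q : E}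
    {X : E →L[ℝ] E} (hX : HasSuperjetAt (supConvolution u K lam) q X ξ) (hy : K ∈ 𝓝 y)
    (hξ : supConvolution u K lam ξ = u y - ‖y - ξ‖ ^ 2 / (2 * lam)) : HasSuperjetAt u q X y := by
  intro κ hκ
  have hyK : ∀ᶠ h in 𝓝 (0 : E), y + h ∈ K :=
    (continuous_const_add y).continuousAt.eventually_mem (by rwa [add_zero])
  filter_upwards [hX κ hκ, hyK] with h hle hmem
  -- Moving the maximizer and the centre together leaves the penalization unchanged.
  have hshift := le_supConvolution (lam := lam) hK hu hmem (ξ + h)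
  rw [add_sub_add_right_eq_sub] at hshift
  linarith

theorem hasSuperjetAt_supConvolution [FiniteDimensional ℝ E] (hlam : 0 < lam) {m : E → E}
    (hm : ∀ ξ, HasSubgradientAt (fun ξ => lam * supConvolution u K lam ξ + 1 / 2 * ‖ξ‖ ^ 2) (m ξ) ξ)
    {M : E →L[ℝ] E} {ξ : E} (hM : HasFDerivAt m M ξ) :
    HasSuperjetAt (supConvolution u K lam) (lam⁻¹ • (m ξ - ξ)) (lam⁻¹ • (M - 1)) ξ := by
  intro κ hκ
  filter_upwards [eventually_le_of_hasFDerivAt_subgradient hm hM (mul_pos hlam hκ)] with h hle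
  rw [norm_add_sq_real] at hle
  simp only [smul_apply, sub_apply, one_apply_eq_self, real_inner_smul_left, inner_sub_left,
    real_inner_self_eq_norm_sq]
  refine le_of_mul_le_mul_left ?_ hlam
  field_simp
  linarith

theorem exists_symmetric_superjet_of_hasFDerivAt_maximizer [FiniteDimensional ℝ E]
    (hK : IsCompact K) (hu : ContinuousOn u K) (hlam : 0 < lam) {m : E → E} (hmK : ∀ ξ, m ξ ∈ K)
    (hm : ∀ ξ, supConvolution u K lam ξ = u (m ξ) - ‖m ξ - ξ‖ ^ 2 / (2 * lam)) {ξ : E}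
    {M : E →L[ℝ] E} (hM : HasFDerivAt m M ξ) (hξ : K ∈ 𝓝 (m ξ)) :
    ∃ X : E →L[ℝ] E, (X : E →ₗ[ℝ] E).IsSymmetric ∧
      HasSuperjetAt u (lam⁻¹ • (m ξ - ξ)) X (m ξ) ∧
      (∀ h, -(lam⁻¹ * ‖h‖ ^ 2) ≤ ⟪X h, h⟫) ∧
      ∀ h, ⟪X h, h⟫ = lam⁻¹ * (⟪M h, h⟫ - ‖h‖ ^ 2) := by
  have hsub (ξ : E) := hasSubgradientAt_supConvolution hK hu hlam (hmK ξ) (hm ξ)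
  obtain ⟨X, hXsymm, hX⟩ := exists_isSymmetric_inner_self_eq (lam⁻¹ • (M - 1))
  have hXM (h : E) : ⟪X h, h⟫ = lam⁻¹ * (⟪M h, h⟫ - ‖h‖ ^ 2) := by
    rw [hX, smul_apply, real_inner_smul_left, sub_apply, inner_sub_left, one_apply_eq_self,
      real_inner_self_eq_norm_sq]
  refine ⟨X, hXsymm, ?_, fun h => ?_, hXM⟩
  · exact ((hasSuperjetAt_supConvolution hlam hsub hM).of_supConvolution hK hu hξ
      (hm ξ)).congr_inner_self hX
  · have : 0 ≤ lam⁻¹ * ⟪M h, h⟫ :=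
      mul_nonneg (inv_nonneg.2 hlam.le) (inner_fderiv_subgradient_nonneg hsub hM h)
    rw [hXM]
    linarith

end SupConvolution

section Product

theorem differentiableAt_component_of_piLp {ι : Type*} [Finite ι] {E : ι → Type*}
    [∀ i, NormedAddCommGroup (E i)] [∀ i, NormedSpace ℝ (E i)] {m : ∀ i, E i → E i} {x : PiLp 2 E}
    (hm : DifferentiableAt ℝ (fun x : PiLp 2 E => (WithLp.toLp 2 fun i => m i (x i) : PiLp 2 E)) x)
    (i : ι) : DifferentiableAt ℝ (m i) (x i) := by
  classical
  cases nonempty_fintype ι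
  have hupdate : DifferentiableAt ℝ
      (fun y => (WithLp.toLp 2 (Function.update (x : ∀ i, E i) i y) : PiLp 2 E)) (x i) :=
    (PiLp.hasFDerivAt_toLp (𝕜 := ℝ) 2 _).differentiableAt.comp (x i)
      (hasFDerivAt_update (𝕜 := ℝ) (x : ∀ i, E i) (x i)).differentiableAt
  have hcomp := ((differentiableAt_piLp 2).1 hm i)
  have hx : (WithLp.toLp 2 (Function.update (x : ∀ i, E i) i (x i)) : PiLp 2 E) = x := by simp
  have := DifferentiableAt.comp (x i) (by rwa [hx]) hupdate (g := fun x : PiLp 2 E => m i (x i))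
  simpa [Function.comp_def] using this

variable {ι : Type*} [Fintype ι] {E : ι → Type*} [∀ i, NormedAddCommGroup (E i)]
  [∀ i, InnerProductSpace ℝ (E i)]

theorem hasSubgradientAt_piLp_sum {g : ∀ i, E i → ℝ} {p x : PiLp 2 E}
    (hp : ∀ i, HasSubgradientAt (g i) (p i) (x i)) :
    HasSubgradientAt (fun x : PiLp 2 E => ∑ i, g i (x i)) p x := fun y => by
  rw [PiLp.inner_apply, ← Finset.sum_add_distrib]
  exact Finset.sum_le_sum fun i _ => hp i (y i)

theorem inner_fderiv_piLp_eq_sum {m : ∀ i, E i → E i} {x : PiLp 2 E} {M : PiLp 2 E →L[ℝ] PiLp 2 E}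
    {N : ∀ i, E i →L[ℝ] E i}
    (hM : HasFDerivAt (fun x : PiLp 2 E => (WithLp.toLp 2 fun i => m i (x i) : PiLp 2 E)) M x)
    (hN : ∀ i, HasFDerivAt (m i) (N i) (x i)) (h : PiLp 2 E) :
    ⟪M h, h⟫ = ∑ i, ⟪N i (h i), h i⟫ := by
  rw [PiLp.inner_apply]
  refine Finset.sum_congr rfl fun i _ => ?_
  have hproj : HasFDerivAt (fun x : PiLp 2 E => m i (x i)) (PiLp.proj 2 E i ∘L M) x :=
    (PiLp.proj (𝕜 := ℝ) 2 E i).hasFDerivAt.comp x hM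
  have hchain : HasFDerivAt (fun x : PiLp 2 E => m i (x i)) (N i ∘L PiLp.proj 2 E i) x :=
    (hN i).comp x (PiLp.hasFDerivAt_apply 2 x i)
  have : (M h) i = N i (h i) := DFunLike.congr_fun (hproj.unique hchain) h
  rw [this]

theorem exists_hasFDerivAt_subgradient_of_sum_le [∀ i, FiniteDimensional ℝ (E i)]
    {g : ∀ i, E i → ℝ} {m : ∀ i, E i → E i} (hm : ∀ i ξ, HasSubgradientAt (g i) (m i ξ) ξ)
    (hg₀ : ∀ i, 0 ≤ g i 0) {B : PiLp 2 E →L[ℝ] PiLp 2 E}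
    (hB : (B : PiLp 2 E →ₗ[ℝ] PiLp 2 E).IsSymmetric) {η : ℝ} (hη : 0 < η)
    (hle : ∀ ξ : PiLp 2 E, ∑ i, g i (ξ i) ≤ 1 / 2 * ⟪B ξ, ξ⟫ - η * ‖ξ‖ ^ 2) {δ : ℝ} (hδ : 0 < δ) :
    ∃ (ξ : PiLp 2 E) (M : ∀ i, E i →L[ℝ] E i),
      (∀ i, ‖ξ i‖ < δ ∧ ‖m i (ξ i)‖ < δ ∧ HasFDerivAt (m i) (M i) (ξ i)) ∧
      ∀ h : PiLp 2 E, ∑ i, ⟪M i (h i), h i⟫ ≤ ⟪B h, h⟫ := by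
  have hs (ξ : PiLp 2 E) := hasSubgradientAt_piLp_sum (x := ξ)
    (p := WithLp.toLp 2 fun i => m i (ξ i)) fun i => hm i (ξ i)
  obtain ⟨ξ, hξ, hmξ, hdiff, htouch⟩ := exists_differentiableAt_subgradient_touching_above hs
    (Finset.sum_nonneg fun i _ => hg₀ i) hB hη hle hδ
  have hdiff_i (i : ι) := (differentiableAt_component_of_piLp hdiff i).hasFDerivAt
  refine ⟨ξ, fun i => fderiv ℝ (m i) (ξ i), fun i => ⟨?_, ?_, hdiff_i i⟩, fun h => ?_⟩
  · exact (PiLp.norm_apply_le ξ i).trans_lt hξ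
  · exact (PiLp.norm_apply_le (WithLp.toLp 2 fun i => m i (ξ i) : PiLp 2 E) i).trans_lt hmξ
  · rw [← inner_fderiv_piLp_eq_sum hdiff.hasFDerivAt hdiff_i]
    exact inner_fderiv_subgradient_le_of_touching_above hs hdiff.hasFDerivAt htouch h

end Product

section TheoremOnSums

theorem exists_pos_four_mul_le_and_mul_lt {c σ : ℝ} (hc : 0 < c) (hσ : 0 < σ) (a : ℝ) :
    ∃ κ > 0, 4 * κ ≤ c ∧ 4 * κ * a < σ := by
  have hlim (a : ℝ) : Tendsto (fun κ : ℝ => 4 * κ * a) (𝓝[>] 0) (𝓝 0) :=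
    ((by fun_prop : Continuous fun κ : ℝ => 4 * κ * a).tendsto' 0 0 (by simp)).mono_left
      nhdsWithin_le_nhds
  obtain ⟨κ, hκ, hκc, hκσ⟩ := (eventually_mem_nhdsWithin.and
    (((hlim 1).eventually_le_const hc).and ((hlim a).eventually_lt_const hσ))).exists
  exact ⟨κ, hκ, by simpa using hκc, hκσ⟩

theorem tendsto_of_norm_sub_lt_one_div {E : Type*} [SeminormedAddCommGroup E] {x : ℕ → E} {a : E}
    (hx : ∀ k, ‖x k - a‖ < 1 / ((k : ℝ) + 1)) : Tendsto x atTop (𝓝 a) :=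
  tendsto_iff_norm_sub_tendsto_zero.2 <| squeeze_zero (fun _ => norm_nonneg _)
    (fun k => (hx k).le) tendsto_one_div_add_atTop_nhds_zero_nat

theorem exists_forall_mem_closedBall_of_eventually_piLp {ι : Type*} [Finite ι]
    {E : ι → Type*} [∀ i, NormedAddCommGroup (E i)] {p : ∀ i, E i → Prop} {P : PiLp 2 E → Prop}
    (hp : ∀ i, ∀ᶠ x in 𝓝 0, p i x) (hP : ∀ᶠ x in 𝓝 0, P x) :
    ∃ r > 0, (∀ i, ∀ x ∈ closedBall (0 : E i) r, p i x) ∧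
      ∀ x : PiLp 2 E, (∀ i, x i ∈ closedBall 0 r) → P x := by
  classical
  cases nonempty_fintype ι
  have hp_pi : ∀ᶠ x : ∀ i, E i in 𝓝 0, ∀ i, p i (x i) :=
    eventually_all.2 fun i => (continuous_apply i).continuousAt.eventually (hp i)
  have hP_pi : ∀ᶠ x : ∀ i, E i in 𝓝 0, P (WithLp.toLp 2 x) :=
    (PiLp.continuous_toLp 2 E).continuousAt.eventually hP
  obtain ⟨r, hr, hball⟩ := nhds_basis_closedBall.eventually_iff.1 (hp_pi.and hP_pi)
  refine ⟨r, hr, fun i x hx => ?_, fun x hx => ?_⟩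
  · have hsingle : Pi.single i x ∈ closedBall (0 : ∀ i, E i) r := by
      rwa [mem_closedBall_zero_iff, Pi.norm_single, ← mem_closedBall_zero_iff]
    simpa using (hball hsingle).1 i
  · have hx_pi : (x : ∀ i, E i) ∈ closedBall 0 r := by
      rw [closedBall_pi _ hr.le]
      exact fun i _ => hx i
    exact (hball hx_pi).2

variable {ι : Type*} [Fintype ι] {E : ι → Type*} [∀ i, NormedAddCommGroup (E i)]
  [∀ i, InnerProductSpace ℝ (E i)]

theorem sum_supConvolution_le {u : ∀ i, E i → ℝ} {K : ∀ i, Set (E i)} {lam κ c : ℝ}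
    {A T : PiLp 2 E →L[ℝ] PiLp 2 E} {m : ∀ i, E i → E i} (hlam : lam ≠ 0)
    (hmK : ∀ i ξ, m i ξ ∈ K i)
    (hm : ∀ i ξ, supConvolution (u i) (K i) lam ξ = u i (m i ξ) - ‖m i ξ - ξ‖ ^ 2 / (2 * lam))
    (hA : (A : PiLp 2 E →ₗ[ℝ] PiLp 2 E).IsSymmetric) (hAT : Function.RightInverse T A)
    (hκ : 0 ≤ κ) (hκc : 4 * κ ≤ c) (hc : ∀ x, c * ‖x‖ ^ 2 ≤ ⟪A x, x⟫)
    (hu : ∀ x : PiLp 2 E, (∀ i, x i ∈ K i) →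
      lam * ∑ i, u i (x i) ≤ 1 / 2 * (‖x‖ ^ 2 - ⟪A x, x⟫) + κ * ‖x‖ ^ 2) (ξ : PiLp 2 E) :
    ∑ i, (lam * supConvolution (u i) (K i) lam (ξ i) + 1 / 2 * ‖ξ i‖ ^ 2) ≤
      1 / 2 * ⟪T ξ, ξ⟫ + 2 * κ * ‖T‖ ^ 2 * ‖ξ‖ ^ 2 := by
  let y : PiLp 2 E := WithLp.toLp 2 fun i => m i (ξ i)
  calc ∑ i, (lam * supConvolution (u i) (K i) lam (ξ i) + 1 / 2 * ‖ξ i‖ ^ 2)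
      = ∑ i, (lam * u i (y i) - 1 / 2 * ‖y i‖ ^ 2 + ⟪y i, ξ i⟫) :=
        Finset.sum_congr rfl fun i _ => by rw [hm, mul_sub_norm_sq_div_add hlam]
    _ = lam * ∑ i, u i (y i) - 1 / 2 * ‖y‖ ^ 2 + ⟪y, ξ⟫ := by
        rw [Finset.sum_add_distrib, Finset.sum_sub_distrib, ← Finset.mul_sum, ← Finset.mul_sum,
          PiLp.norm_sq_eq_of_L2, PiLp.inner_apply]
    _ ≤ ⟪y, ξ⟫ - 1 / 2 * ⟪A y, y⟫ + κ * ‖y‖ ^ 2 := by linarith [hu y fun i => hmK i (ξ i)]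
    _ ≤ 1 / 2 * ⟪T ξ, ξ⟫ + 2 * κ * ‖T‖ ^ 2 * ‖ξ‖ ^ 2 :=
        add_inner_sub_half_inner_le hA hAT hκ hκc hc y ξ

theorem eventually_mul_sum_le_of_hasSuperjetAt {u : ∀ i, E i → ℝ} {x₀ p : PiLp 2 E}
    {Z : PiLp 2 E →L[ℝ] PiLp 2 E} {lam κ : ℝ} (hlam : 0 < lam) (hκ : 0 < κ)
    (hjet : HasSuperjetAt (fun x : PiLp 2 E => ∑ i, u i (x i)) p Z x₀) :
    ∀ᶠ y : PiLp 2 E in 𝓝 0, lam * ∑ i, (u i (x₀ i + y i) - u i (x₀ i) - ⟪p i, y i⟫) ≤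
      1 / 2 * (‖y‖ ^ 2 - ⟪(1 - lam • Z) y, y⟫) + κ * ‖y‖ ^ 2 := by
  filter_upwards [hjet (κ / lam) (div_pos hκ hlam)] with y hy
  have hquad : ‖y‖ ^ 2 - ⟪(1 - lam • Z) y, y⟫ = lam * ⟪Z y, y⟫ := by
    rw [sub_apply, smul_apply, one_apply_eq_self, inner_sub_left, real_inner_smul_left,
      real_inner_self_eq_norm_sq, sub_sub_cancel]
  have hsum : ∑ i, (u i (x₀ i + y i) - u i (x₀ i) - ⟪p i, y i⟫) ≤
      1 / 2 * ⟪Z y, y⟫ + κ / lam * ‖y‖ ^ 2 := by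
    rw [Finset.sum_sub_distrib, Finset.sum_sub_distrib, ← PiLp.inner_apply]
    simp only [PiLp.add_apply] at hy
    linarith
  calc lam * ∑ i, (u i (x₀ i + y i) - u i (x₀ i) - ⟪p i, y i⟫)
      ≤ lam * (1 / 2 * ⟪Z y, y⟫ + κ / lam * ‖y‖ ^ 2) := by gcongr
    _ = 1 / 2 * (‖y‖ ^ 2 - ⟪(1 - lam • Z) y, y⟫) + κ * ‖y‖ ^ 2 := by
      rw [hquad]; field_simp

theorem norm_le_of_sum_inner_self_le {X : ∀ i, E i →L[ℝ] E i}
    (hX : ∀ i, (X i : E i →ₗ[ℝ] E i).IsSymmetric) {a b : ℝ} (ha : 0 ≤ a) (hb : 0 ≤ b)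
    (hlower : ∀ i h, -(a * ‖h‖ ^ 2) ≤ ⟪X i h, h⟫)
    (hupper : ∀ h : PiLp 2 E, ∑ i, ⟪X i (h i), h i⟫ ≤ b * ‖h‖ ^ 2) (i : ι) : ‖X i‖ ≤ a + b := by
  classical
  refine norm_le_of_abs_inner_self_le (hX i) (by positivity) fun h => abs_le.2 ?_
  have hsingle : ⟪X i h, h⟫ ≤ b * ‖h‖ ^ 2 := by
    have hsum := hupper (PiLp.single 2 i h)
    rwa [PiLp.norm_single, Finset.sum_eq_single_of_mem i (Finset.mem_univ i), PiLp.single_eq_same]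
      at hsum
    intro j _ hj
    rw [PiLp.single_eq_of_ne _ hj, inner_zero_right]
  have hah : 0 ≤ a * ‖h‖ ^ 2 := by positivity
  have hbh : 0 ≤ b * ‖h‖ ^ 2 := by positivity
  constructor <;> linarith [hlower i h]

variable [∀ i, FiniteDimensional ℝ (E i)]

theorem exists_superjet_of_mul_sum_le {u : ∀ i, E i → ℝ} {lam κ c r : ℝ}
    {A T : PiLp 2 E →L[ℝ] PiLp 2 E} (hlam : 0 < lam) (hr : 0 < r)
    (hu : ∀ i, ContinuousOn (u i) (closedBall 0 r)) (hu₀ : ∀ i, u i 0 = 0)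
    (hA : (A : PiLp 2 E →ₗ[ℝ] PiLp 2 E).IsSymmetric) (hAT : Function.RightInverse T A)
    (hκ : 0 ≤ κ) (hκc : 4 * κ ≤ c) (hc : ∀ x, c * ‖x‖ ^ 2 ≤ ⟪A x, x⟫)
    (hle : ∀ x : PiLp 2 E, (∀ i, x i ∈ closedBall 0 r) →
      lam * ∑ i, u i (x i) ≤ 1 / 2 * (‖x‖ ^ 2 - ⟪A x, x⟫) + κ * ‖x‖ ^ 2)
    {σ : ℝ} (hσ : 4 * κ * ‖T‖ ^ 2 < σ) {δ : ℝ} (hδ : 0 < δ) :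
    ∃ (x q : ∀ i, E i) (X : ∀ i, E i →L[ℝ] E i),
      (∀ i, ‖x i‖ < δ ∧ ‖q i‖ < δ ∧ (X i : E i →ₗ[ℝ] E i).IsSymmetric ∧
        HasSuperjetAt (u i) (q i) (X i) (x i) ∧ ∀ h, -(lam⁻¹ * ‖h‖ ^ 2) ≤ ⟪X i h, h⟫) ∧
      ∀ h : PiLp 2 E, ∑ i, ⟪X i (h i), h i⟫ ≤
        lam⁻¹ * (⟪T h, h⟫ + σ * ‖h‖ ^ 2 - ‖h‖ ^ 2) := by
  have hprop (i : ι) := FiniteDimensional.proper ℝ (E i)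
  have hK (i : ι) : IsCompact (closedBall (0 : E i) r) := isCompact_closedBall 0 r
  choose m hmK hm using fun i ξ =>
    exists_supConvolution_eq (hK i) (nonempty_closedBall.2 hr.le) (hu i) lam ξ
  have hsub (i : ι) (ξ : E i) :=
    hasSubgradientAt_supConvolution (hK i) (hu i) hlam (hmK i ξ) (hm i ξ)
  have hg₀ (i : ι) : 0 ≤ supConvolution (u i) (closedBall 0 r) lam 0 :=
    (hu₀ i).ge.trans (self_le_supConvolution (hK i) (hu i) (mem_closedBall_self hr.le))
  have hB : ((T + σ • 1 : PiLp 2 E →L[ℝ] PiLp 2 E) : PiLp 2 E →ₗ[ℝ] PiLp 2 E).IsSymmetric :=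
    (isSymmetric_of_rightInverse hA hAT).add (LinearMap.IsSymmetric.one.smul rfl)
  obtain ⟨ρ, hρ, hρr, hρδ, hρlam⟩ : ∃ ρ > 0, ρ ≤ r ∧ ρ ≤ δ ∧ lam⁻¹ * (ρ + ρ) ≤ δ :=
    ⟨min r (min δ (lam * δ / 2)), by positivity, min_le_left _ _,
      (min_le_right _ _).trans (min_le_left _ _), by
        rw [inv_mul_le_iff₀ hlam]
        linarith [(min_le_right r (min δ (lam * δ / 2))).trans (min_le_right _ _)]⟩
  obtain ⟨ξ, M, hξ, hMB⟩ := exists_hasFDerivAt_subgradient_of_sum_le hsub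
    (fun i => by simpa using mul_nonneg hlam.le (hg₀ i)) hB (half_pos (sub_pos.2 hσ))
    (fun ξ => by
      rw [inner_add_smul_one_self]
      linarith [sum_supConvolution_le hlam.ne' hmK hm hA hAT hκ hκc hc hle ξ]) hρ
  choose X hXsymm hXjet hXlower hXM using fun i =>
    exists_symmetric_superjet_of_hasFDerivAt_maximizer (hK i) (hu i) hlam (hmK i) (hm i) (hξ i).2.2
      (closedBall_mem_nhds_of_mem (mem_ball_zero_iff.2 ((hξ i).2.1.trans_le hρr)))
  refine ⟨fun i => m i (ξ i), fun i => lam⁻¹ • (m i (ξ i) - ξ i), X, fun i =>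
    ⟨(hξ i).2.1.trans_le hρδ, ?_, hXsymm i, hXjet i, hXlower i⟩, fun h => ?_⟩
  · rw [norm_smul, Real.norm_of_nonneg (by positivity)]
    refine lt_of_lt_of_le ?_ hρlam
    gcongr
    exact (norm_sub_le _ _).trans_lt (add_lt_add (hξ i).2.1 (hξ i).1)
  · calc ∑ i, ⟪X i (h i), h i⟫ = lam⁻¹ * (∑ i, ⟪M i (h i), h i⟫ - ‖h‖ ^ 2) := by
          simp only [hXM, ← Finset.mul_sum, Finset.sum_sub_distrib, PiLp.norm_sq_eq_of_L2]
      _ ≤ lam⁻¹ * (⟪T h, h⟫ + σ * ‖h‖ ^ 2 - ‖h‖ ^ 2) := by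
          rw [← inner_add_smul_one_self]; gcongr; exact hMB h

variable {u : ∀ i, E i → ℝ} {x₀ p : PiLp 2 E} {Z R : PiLp 2 E →L[ℝ] PiLp 2 E} {lam : ℝ}

theorem exists_superjet_of_hasSuperjetAt_sum (hlam : 0 < lam)
    (hu : ∀ i, ∀ᶠ x in 𝓝 (x₀ i), ContinuousAt (u i) x)
    (hjet : HasSuperjetAt (fun x : PiLp 2 E => ∑ i, u i (x i)) p Z x₀)
    (hZ : (Z : PiLp 2 E →ₗ[ℝ] PiLp 2 E).IsSymmetric)
    (hpos : ∀ x ≠ 0, 0 < ⟪(1 - lam • Z) x, x⟫) (hR : (1 - lam • Z) * R = Z) {δ : ℝ} (hδ : 0 < δ) :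
    ∃ (x q : ∀ i, E i) (X : ∀ i, E i →L[ℝ] E i),
      (∀ i, ‖x i - x₀ i‖ < δ ∧ ‖q i - p i‖ < δ ∧ (X i : E i →ₗ[ℝ] E i).IsSymmetric ∧
        HasSuperjetAt (u i) (q i) (X i) (x i) ∧ ∀ h, -(lam⁻¹ * ‖h‖ ^ 2) ≤ ⟪X i h, h⟫) ∧
      ∀ h : PiLp 2 E, ∑ i, ⟪X i (h i), h i⟫ ≤ ⟪R h, h⟫ + δ * ‖h‖ ^ 2 := by
  obtain ⟨c, hc, hcoer⟩ := exists_pos_mul_norm_sq_le_inner hpos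
  have hAsymm : ((1 - lam • Z : PiLp 2 E →L[ℝ] PiLp 2 E) : PiLp 2 E →ₗ[ℝ] PiLp 2 E).IsSymmetric :=
    LinearMap.IsSymmetric.one.sub (hZ.smul rfl)
  obtain ⟨κ, hκ, hκc, hκδ⟩ :=
    exists_pos_four_mul_le_and_mul_lt hc (mul_pos hlam hδ) (‖1 + lam • R‖ ^ 2)
  have hcont (i : ι) : ∀ᶠ y in 𝓝 (0 : E i),
      ContinuousAt (fun y => u i (x₀ i + y) - u i (x₀ i) - ⟪p i, y⟫) y := by
    have hadd : Tendsto (x₀ i + ·) (𝓝 (0 : E i)) (𝓝 (x₀ i)) :=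
      (map_add_left_nhds_zero _).le
    filter_upwards [hadd.eventually (hu i)] with y hy
    exact ((hy.comp (f := (x₀ i + ·)) (by fun_prop)).sub_const _).sub
      (continuous_const.inner continuous_id).continuousAt
  obtain ⟨r, hr, hcont_r, hle_r⟩ := exists_forall_mem_closedBall_of_eventually_piLp hcont
    (eventually_mul_sum_le_of_hasSuperjetAt hlam hκ hjet)
  obtain ⟨y, q, X, hX, hXsum⟩ := exists_superjet_of_mul_sum_le hlam hr
    (fun i y hy => (hcont_r i y hy).continuousWithinAt) (fun i => by simp) hAsymm
    (rightInverse_one_add_smul hR) hκ.le hκc hcoer hle_r hκδ hδ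
  refine ⟨fun i => x₀ i + y i, fun i => p i + q i, X, fun i => ?_, fun h => ?_⟩
  · obtain ⟨hy, hq, hsymm, hjet_i, hlower⟩ := hX i
    exact ⟨by simpa using hy, by simpa using hq, hsymm, hasSuperjetAt_translate_iff.1 hjet_i,
      hlower⟩
  · refine (hXsum h).trans_eq ?_
    rw [add_apply, smul_apply, one_apply_eq_self, inner_add_left, real_inner_smul_left,
      real_inner_self_eq_norm_sq]
    field_simp
    ring

theorem exists_closedSuperjet_of_hasSuperjetAt_sum (hlam : 0 < lam)
    (hu : ∀ i, ∀ᶠ x in 𝓝 (x₀ i), ContinuousAt (u i) x)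
    (hjet : HasSuperjetAt (fun x : PiLp 2 E => ∑ i, u i (x i)) p Z x₀)
    (hZ : (Z : PiLp 2 E →ₗ[ℝ] PiLp 2 E).IsSymmetric)
    (hpos : ∀ x ≠ 0, 0 < ⟪(1 - lam • Z) x, x⟫) (hR : (1 - lam • Z) * R = Z) :
    ∃ X : ∀ i, E i →L[ℝ] E i,
      (∀ i, (X i : E i →ₗ[ℝ] E i).IsSymmetric ∧ HasClosedSuperjetAt (u i) (p i) (X i) (x₀ i) ∧
        ∀ h, -(lam⁻¹ * ‖h‖ ^ 2) ≤ ⟪X i h, h⟫) ∧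
      ∀ h : PiLp 2 E, ∑ i, ⟪X i (h i), h i⟫ ≤ ⟪R h, h⟫ := by
  choose x q X hX hXsum using fun k : ℕ =>
    exists_superjet_of_hasSuperjetAt_sum hlam hu hjet hZ hpos hR (Nat.one_div_pos_of_nat (n := k))
  choose hx hq hsymm hsuper hlower using hX
  have hbound (k : ℕ) : ‖X k‖ ≤ lam⁻¹ + (‖R‖ + 1) :=
    (pi_norm_le_iff_of_nonneg (by positivity)).2 <|
      norm_le_of_sum_inner_self_le (hsymm k) (by positivity) (by positivity) (hlower k) fun h => by
        have hk : 1 / ((k : ℝ) + 1) ≤ 1 := (div_le_one (by positivity)).2 (by simp)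
        calc ∑ i, ⟪X k i (h i), h i⟫ ≤ ⟪R h, h⟫ + 1 / ((k : ℝ) + 1) * ‖h‖ ^ 2 := hXsum k h
          _ ≤ ‖R‖ * ‖h‖ ^ 2 + 1 * ‖h‖ ^ 2 := by gcongr; exact inner_apply_self_le_opNorm_mul_sq R h
          _ = (‖R‖ + 1) * ‖h‖ ^ 2 := by ring
  have := FiniteDimensional.proper ℝ (∀ i, E i →L[ℝ] E i)
  obtain ⟨X₀, -, s, hs, hlim⟩ := tendsto_subseq_of_bounded isBounded_closedBall
    fun k => mem_closedBall_zero_iff.2 (hbound k)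
  have hlim_i (i : ι) : Tendsto (fun k => X (s k) i) atTop (𝓝 (X₀ i)) := tendsto_pi_nhds.1 hlim i
  have happly (i : ι) (h : E i) : Tendsto (fun k => X (s k) i h) atTop (𝓝 (X₀ i h)) :=
    ((ContinuousLinearMap.apply ℝ (E i) h).continuous.tendsto _).comp (hlim_i i)
  have hinner (i : ι) (h h' : E i) :
      Tendsto (fun k => ⟪X (s k) i h, h'⟫) atTop (𝓝 ⟪X₀ i h, h'⟫) :=
    (happly i h).inner tendsto_const_nhds
  refine ⟨X₀, fun i => ⟨fun h h' => ?_, ?_, fun h => ?_⟩, fun h => ?_⟩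
  · exact tendsto_nhds_unique ((hinner i h h').congr fun k => hsymm (s k) i h h')
      (tendsto_const_nhds.inner (happly i h'))
  · have hx₀ := (tendsto_of_norm_sub_lt_one_div fun k => hx k i).comp hs.tendsto_atTop
    have hq₀ := (tendsto_of_norm_sub_lt_one_div fun k => hq k i).comp hs.tendsto_atTop
    exact ⟨_, _, _, fun k => hsuper (s k) i, hx₀, (hu i).self_of_nhds.tendsto.comp hx₀, hq₀,
      hlim_i i⟩
  · exact ge_of_tendsto' (hinner i h h) fun k => hlower (s k) i h
  · refine le_of_tendsto_of_tendsto' (tendsto_finsetSum _ fun i _ => hinner i (h i) (h i)) ?_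
      fun k => hXsum (s k) h
    have hone := tendsto_one_div_add_atTop_nhds_zero_nat (𝕜 := ℝ) |>.comp hs.tendsto_atTop
    simpa using (hone.mul_const (‖h‖ ^ 2)).const_add ⟪R h, h⟫

end TheoremOnSums

section Pullback

variable {F G : Type*} [NormedAddCommGroup F] [InnerProductSpace ℝ F]

theorem HasSuperjetAt.of_isLocalMax_sub {u ψ : F → ℝ} {p x : F} {X : F →L[ℝ] F}
    (hψ : HasSuperjetAt ψ p X x) (hmax : IsLocalMax (fun y => u y - ψ y) x) :
    HasSuperjetAt u p X x := by
  intro κ hκ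
  have hadd : Tendsto (x + ·) (𝓝 (0 : F)) (𝓝 x) :=
    (map_add_left_nhds_zero x).le
  filter_upwards [hψ κ hκ, hadd.eventually hmax] with h hψh hmaxh
  linarith

variable [NormedAddCommGroup G] [InnerProductSpace ℝ G] [CompleteSpace F] [CompleteSpace G]

theorem inner_adjoint_comp_comp_self (D : G →L[ℝ] F) (Z : F →L[ℝ] F) (h : G) :
    ⟪(D.adjoint ∘L Z ∘L D) h, h⟫ = ⟪Z (D h), D h⟫ :=
  D.adjoint_inner_left h (Z (D h))

theorem HasSuperjetAt.comp_clm {ψ : F → ℝ} {z : F} {Z : F →L[ℝ] F} {D : G →L[ℝ] F} {x : G}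
    (hψ : HasSuperjetAt ψ z Z (D x)) :
    HasSuperjetAt (fun y => ψ (D y)) (D.adjoint z) (D.adjoint ∘L Z ∘L D) x := by
  intro κ hκ
  have hD : Tendsto D (𝓝 0) (𝓝 0) := D.continuous.tendsto' _ _ (map_zero D)
  filter_upwards [hD.eventually (hψ (κ / (‖D‖ ^ 2 + 1)) (by positivity))] with h hh
  have hDh : ‖D h‖ ^ 2 ≤ (‖D‖ ^ 2 + 1) * ‖h‖ ^ 2 := by
    have : ‖D h‖ ^ 2 ≤ (‖D‖ * ‖h‖) ^ 2 := by gcongr; exact D.le_opNorm h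
    linarith [mul_pow ‖D‖ ‖h‖ 2, sq_nonneg ‖h‖]
  rw [map_add, D.adjoint_inner_left, inner_adjoint_comp_comp_self]
  calc ψ (D x + D h)
      ≤ ψ (D x) + ⟪z, D h⟫ + 1 / 2 * ⟪Z (D h), D h⟫ + κ / (‖D‖ ^ 2 + 1) * ‖D h‖ ^ 2 := hh
    _ ≤ ψ (D x) + ⟪z, D h⟫ + 1 / 2 * ⟪Z (D h), D h⟫ +
        κ / (‖D‖ ^ 2 + 1) * ((‖D‖ ^ 2 + 1) * ‖h‖ ^ 2) := by gcongr
    _ = ψ (D x) + ⟪z, D h⟫ + 1 / 2 * ⟪Z (D h), D h⟫ + κ * ‖h‖ ^ 2 := by field_simp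

theorem isSymmetric_adjoint_comp_comp {D : G →L[ℝ] F} {Z : F →L[ℝ] F}
    (hZ : (Z : F →ₗ[ℝ] F).IsSymmetric) :
    ((D.adjoint ∘L Z ∘L D : G →L[ℝ] G) : G →ₗ[ℝ] G).IsSymmetric := fun x y =>
  calc ⟪D.adjoint (Z (D x)), y⟫ = ⟪Z (D x), D y⟫ := D.adjoint_inner_left _ _
    _ = ⟪D x, Z (D y)⟫ := hZ _ _
    _ = ⟪x, D.adjoint (Z (D y))⟫ := (D.adjoint_inner_right _ _).symm

end Pullback

section Difference

variable {F : Type*} [NormedAddCommGroup F] [InnerProductSpace ℝ F]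

/-- The difference map `(x, y) ↦ x - y` on the Hilbert sum of two copies of `F`. -/
noncomputable def differenceCLM (F : Type*) [NormedAddCommGroup F] [InnerProductSpace ℝ F] :
    PiLp 2 (fun _ : Fin 2 => F) →L[ℝ] F :=
  PiLp.proj (𝕜 := ℝ) 2 (fun _ : Fin 2 => F) 0 - PiLp.proj 2 (fun _ : Fin 2 => F) 1

theorem differenceCLM_apply (h : PiLp 2 fun _ : Fin 2 => F) :
    differenceCLM F h = h 0 - h 1 :=
  rfl

theorem norm_differenceCLM_sq_le (h : PiLp 2 fun _ : Fin 2 => F) :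
    ‖differenceCLM F h‖ ^ 2 ≤ 2 * ‖h‖ ^ 2 := by
  rw [differenceCLM_apply, PiLp.norm_sq_eq_of_L2, Fin.sum_univ_two]
  linarith [parallelogram_law_with_norm ℝ (h 0) (h 1), mul_self_nonneg ‖h 0 + h 1‖]

variable [CompleteSpace F]

theorem adjoint_differenceCLM_apply (w : F) :
    (differenceCLM F).adjoint w = WithLp.toLp 2 ![w, -w] :=
  ext_inner_right ℝ fun h => by
    rw [ContinuousLinearMap.adjoint_inner_left, PiLp.inner_apply, Fin.sum_univ_two]
    simp [differenceCLM_apply, inner_sub_right, ← sub_eq_add_neg]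

theorem differenceCLM_adjoint_apply (w : F) :
    differenceCLM F ((differenceCLM F).adjoint w) = (2 : ℝ) • w := by
  rw [adjoint_differenceCLM_apply, two_smul]
  simp [differenceCLM_apply]

theorem one_sub_smul_mul_adjoint_differenceCLM_conj {Z R : F →L[ℝ] F} {ε : ℝ}
    (hR : (1 - ε • Z) * R = Z) :
    (1 - (ε / 2) • ((differenceCLM F).adjoint ∘L Z ∘L differenceCLM F)) *
        ((differenceCLM F).adjoint ∘L R ∘L differenceCLM F) =
      (differenceCLM F).adjoint ∘L Z ∘L differenceCLM F := by
  ext1 x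
  set D := differenceCLM F
  have hRx : R (D x) - ε • Z (R (D x)) = Z (D x) := DFunLike.congr_fun hR (D x)
  calc D.adjoint (R (D x)) - (ε / 2) • D.adjoint (Z (D (D.adjoint (R (D x)))))
      = D.adjoint (R (D x) - ε • Z (R (D x))) := by
        rw [differenceCLM_adjoint_apply, map_smul, map_smul, smul_smul,
          div_mul_cancel₀ _ two_ne_zero, map_sub, map_smul]
    _ = D.adjoint (Z (D x)) := by rw [hRx]

theorem inner_one_sub_smul_adjoint_differenceCLM_conj_pos {Z : F →L[ℝ] F} {ε : ℝ}
    (hpos : ∀ w ≠ 0, 0 < ⟪(1 - ε • Z) w, w⟫) {x : PiLp 2 fun _ : Fin 2 => F} (hx : x ≠ 0) :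
    0 < ⟪(1 - (ε / 2) • ((differenceCLM F).adjoint ∘L Z ∘L differenceCLM F)) x, x⟫ := by
  set D := differenceCLM F
  have hquad : ⟪(1 - (ε / 2) • (D.adjoint ∘L Z ∘L D)) x, x⟫ =
      ‖x‖ ^ 2 - 1 / 2 * ‖D x‖ ^ 2 + 1 / 2 * ⟪(1 - ε • Z) (D x), D x⟫ := by
    simp only [sub_apply, smul_apply, one_apply_eq_self, inner_sub_left, real_inner_smul_left,
      inner_adjoint_comp_comp_self, real_inner_self_eq_norm_sq]
    ring
  have hxnorm : 0 < ‖x‖ ^ 2 := by positivity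
  rw [hquad]
  rcases eq_or_ne (D x) 0 with hDx | hDx
  · simpa [hDx] using hxnorm
  · linarith [hpos _ hDx, norm_differenceCLM_sq_le x]

theorem hasSuperjetAt_sub_of_isLocalMax_sub_comp_sub {u v φ : F → ℝ} {x y z : F} {Z : F →L[ℝ] F}
    (hφ : HasSuperjetAt φ z Z (x - y))
    (hmax : IsLocalMax (fun t : F × F => u t.1 - v t.2 - φ (t.1 - t.2)) (x, y)) :
    HasSuperjetAt (fun t : PiLp 2 fun _ : Fin 2 => F => u (t 0) - v (t 1))
      ((differenceCLM F).adjoint z) ((differenceCLM F).adjoint ∘L Z ∘L differenceCLM F)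
      (WithLp.toLp 2 ![x, y]) := by
  refine HasSuperjetAt.of_isLocalMax_sub (HasSuperjetAt.comp_clm hφ) ?_
  have hlim : Tendsto (fun t : PiLp 2 fun _ : Fin 2 => F => (t 0, t 1))
      (𝓝 (WithLp.toLp 2 ![x, y])) (𝓝 (x, y)) :=
    Continuous.tendsto' (by fun_prop) _ _ rfl
  exact hlim.eventually hmax

end Difference

theorem exists_closedSuperjet_of_isLocalMax_sub_comp_sub {F : Type*} [NormedAddCommGroup F]
    [InnerProductSpace ℝ F] [FiniteDimensional ℝ F] {u v φ : F → ℝ} {x y z : F}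
    {Z R : F →L[ℝ] F} {ε : ℝ} (hε : 0 < ε) (hu : ∀ᶠ x' in 𝓝 x, ContinuousAt u x')
    (hv : ∀ᶠ y' in 𝓝 y, ContinuousAt v y') (hφ : HasSuperjetAt φ z Z (x - y))
    (hmax : IsLocalMax (fun t : F × F => u t.1 - v t.2 - φ (t.1 - t.2)) (x, y))
    (hZ : (Z : F →ₗ[ℝ] F).IsSymmetric) (hpos : ∀ w ≠ 0, 0 < ⟪(1 - ε • Z) w, w⟫)
    (hR : (1 - ε • Z) * R = Z) :
    ∃ X W : F →L[ℝ] F, (X : F →ₗ[ℝ] F).IsSymmetric ∧ (W : F →ₗ[ℝ] F).IsSymmetric ∧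
      HasClosedSuperjetAt u z X x ∧ HasClosedSuperjetAt (fun y => -v y) (-z) W y ∧
      (∀ h, -(2 / ε * ‖h‖ ^ 2) ≤ ⟪X h, h⟫) ∧ (∀ h, -(2 / ε * ‖h‖ ^ 2) ≤ ⟪W h, h⟫) ∧
      ∀ h k, ⟪X h, h⟫ + ⟪W k, k⟫ ≤ ⟪R (h - k), h - k⟫ := by
  have hsum : HasSuperjetAt
      (fun t : PiLp 2 fun _ : Fin 2 => F => ∑ i, (![u, fun y => -v y] : Fin 2 → F → ℝ) i (t i))
      ((differenceCLM F).adjoint z) ((differenceCLM F).adjoint ∘L Z ∘L differenceCLM F)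
      (WithLp.toLp 2 ![x, y]) := by
    simpa [Fin.sum_univ_two, ← sub_eq_add_neg] using
      hasSuperjetAt_sub_of_isLocalMax_sub_comp_sub hφ hmax
  have hcont : ∀ i, ∀ᶠ x' in 𝓝 ((WithLp.toLp 2 ![x, y] : PiLp 2 fun _ : Fin 2 => F) i),
      ContinuousAt ((![u, fun y => -v y] : Fin 2 → F → ℝ) i) x' :=
    Fin.forall_fin_two.2 ⟨hu, hv.mono fun _ hy => hy.neg⟩
  obtain ⟨X, hX, hXsum⟩ := exists_closedSuperjet_of_hasSuperjetAt_sum (half_pos hε) hcont hsum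
    (isSymmetric_adjoint_comp_comp hZ)
    (fun _ => inner_one_sub_smul_adjoint_differenceCLM_conj_pos hpos)
    (one_sub_smul_mul_adjoint_differenceCLM_conj hR)
  rw [Fin.forall_fin_two, adjoint_differenceCLM_apply, inv_div] at hX
  obtain ⟨⟨hX₀, hjet₀, hlower₀⟩, hX₁, hjet₁, hlower₁⟩ := hX
  refine ⟨X 0, X 1, hX₀, hX₁, hjet₀, hjet₁, hlower₀, hlower₁, fun h k => ?_⟩
  have hhk := hXsum (WithLp.toLp 2 ![h, k])
  rwa [Fin.sum_univ_two, inner_adjoint_comp_comp_self] at hhk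

section Taylor

variable {E : Type*} [NormedAddCommGroup E] [NormedSpace ℝ E] {φ : E → ℝ} {x : E}

theorem hasDerivAt_segment_sub_taylor {h : E} {t : ℝ} (hφ : DifferentiableAt ℝ φ (x + t • h))
    (B : E →L[ℝ] E →L[ℝ] ℝ) :
    HasDerivAt (fun t : ℝ => φ (x + t • h) - t * fderiv ℝ φ x h - t ^ 2 / 2 * B h h)
      ((fderiv ℝ φ (x + t • h) - fderiv ℝ φ x - B (t • h)) h) t := by
  have hline : HasDerivAt (fun t : ℝ => x + t • h) h t := by
    simpa using ((hasDerivAt_id t).smul_const h).const_add x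
  have := ((hφ.hasFDerivAt.comp_hasDerivAt t hline).sub
    ((hasDerivAt_id t).mul_const (fderiv ℝ φ x h))).sub
      ((((hasDerivAt_id t).pow 2).div_const 2).mul_const (B h h))
  exact this.congr_deriv (by simp)

theorem eventually_le_of_hasFDerivAt_fderiv {B : E →L[ℝ] E →L[ℝ] ℝ}
    (hφ : ∀ᶠ y in 𝓝 x, DifferentiableAt ℝ φ y)
    (hB : HasFDerivAt (fderiv ℝ φ) B x) {κ : ℝ} (hκ : 0 < κ) :
    ∀ᶠ h in 𝓝 (0 : E), φ (x + h) ≤ φ x + fderiv ℝ φ x h + 1 / 2 * B h h + κ * ‖h‖ ^ 2 := by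
  have hadd : Tendsto (x + ·) (𝓝 (0 : E)) (𝓝 x) :=
    (map_add_left_nhds_zero x).le
  obtain ⟨δ, hδ, hball⟩ := Metric.eventually_nhds_iff_ball.1
    ((hadd.eventually hφ).and ((hasFDerivAt_iff_isLittleO_nhds_zero.1 hB).def hκ))
  filter_upwards [ball_mem_nhds 0 hδ] with h hh
  have hnorm {t : ℝ} (ht : t ∈ Icc (0 : ℝ) 1) : ‖t • h‖ ≤ ‖h‖ := by
    rw [norm_smul, Real.norm_of_nonneg ht.1]
    exact mul_le_of_le_one_left (norm_nonneg h) ht.2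
  have hmem {t : ℝ} (ht : t ∈ Icc (0 : ℝ) 1) : t • h ∈ ball (0 : E) δ :=
    mem_ball_zero_iff.2 ((hnorm ht).trans_lt (mem_ball_zero_iff.1 hh))
  have hderiv {t : ℝ} (ht : t ∈ Icc (0 : ℝ) 1) :=
    hasDerivAt_segment_sub_taylor (hball _ (hmem ht)).1 B
  obtain ⟨c, hc, hslope⟩ := exists_hasDerivAt_eq_slope _ _ zero_lt_one
    (fun t ht => (hderiv ht).continuousAt.continuousWithinAt)
    fun t ht => hderiv (Ioo_subset_Icc_self ht)
  have hcIcc := Ioo_subset_Icc_self hc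
  have hbound : (fderiv ℝ φ (x + c • h) - fderiv ℝ φ x - B (c • h)) h ≤ κ * ‖h‖ ^ 2 :=
    calc _ ≤ ‖fderiv ℝ φ (x + c • h) - fderiv ℝ φ x - B (c • h)‖ * ‖h‖ :=
          (Real.le_norm_self _).trans (ContinuousLinearMap.le_opNorm _ h)
      _ ≤ κ * ‖h‖ * ‖h‖ := by
          gcongr
          exact (hball _ (hmem hcIcc)).2.trans (by gcongr; exact hnorm hcIcc)
      _ = κ * ‖h‖ ^ 2 := by ring
  rw [hslope] at hbound
  simp only [one_smul, zero_smul, add_zero, sub_zero, div_one] at hbound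
  linarith

end Taylor

section Matrix

theorem dotProduct_fromBlocks_mulVec {l m α : Type*} [Fintype l] [Fintype m]
    [NonUnitalNonAssocSemiring α] (A : Matrix l l α) (B : Matrix l m α) (C : Matrix m l α)
    (D : Matrix m m α) (w : l ⊕ m → α) :
    w ⬝ᵥ (Matrix.fromBlocks A B C D).mulVec w =
      (w ∘ Sum.inl) ⬝ᵥ (A.mulVec (w ∘ Sum.inl) + B.mulVec (w ∘ Sum.inr)) +
        (w ∘ Sum.inr) ⬝ᵥ (C.mulVec (w ∘ Sum.inl) + D.mulVec (w ∘ Sum.inr)) := by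
  rw [Matrix.fromBlocks_mulVec]
  simp [dotProduct, Fintype.sum_sum_type]

variable {m : Type*} [DecidableEq m] {Z : Matrix m m ℝ} {ε : ℝ}

theorem isHermitian_of_one_sub_smul (hε : ε ≠ 0)
    (hZ : (1 - ε • Z).IsHermitian) : Z.IsHermitian := by
  have hεZ : (ε • Z).IsHermitian := by simpa using Matrix.isHermitian_one.sub hZ
  have := hεZ.smul (k := ε⁻¹) rfl
  rwa [inv_smul_smul₀ hε] at this

variable [Fintype m]

theorem isHermitian_inv_one_sub_smul_mul (hZ : Z.IsHermitian)
    (ε : ℝ) : ((1 - ε • Z)⁻¹ * Z).IsHermitian := by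
  have hinv : (1 - ε • Z)⁻¹.IsHermitian :=
    (Matrix.isHermitian_one.sub (hZ.smul (IsSelfAdjoint.all ε))).inv
  have hcomm : Commute (1 - ε • Z) Z := (Commute.one_left Z).sub_left ((Commute.refl Z).smul_left ε)
  have hcomm_inv : Commute (1 - ε • Z)⁻¹ Z := by
    simpa only [Matrix.zpow_neg_one] using Matrix.Commute.zpow_left hcomm (-1)
  exact (hinv.isSelfAdjoint.commute_iff hZ.isSelfAdjoint).1 hcomm_inv

theorem isSymmetric_toEuclideanCLM_iff :
    (Matrix.toEuclideanCLM (𝕜 := ℝ) Z : EuclideanSpace ℝ m →ₗ[ℝ] _).IsSymmetric ↔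
      Z.IsHermitian := by
  rw [Matrix.coe_toEuclideanCLM_eq_toEuclideanLin, Matrix.isSymmetric_toEuclideanLin_iff]

theorem one_sub_smul_toEuclideanCLM (Z : Matrix m m ℝ) (ε : ℝ) :
    1 - ε • Matrix.toEuclideanCLM (𝕜 := ℝ) Z = Matrix.toEuclideanCLM (𝕜 := ℝ) (1 - ε • Z) := by
  rw [map_sub, map_one, map_smul]

theorem inner_toEuclideanCLM_self_pos (hZ : Z.PosDef) {w : EuclideanSpace ℝ m} (hw : w ≠ 0) :
    0 < ⟪Matrix.toEuclideanCLM (𝕜 := ℝ) Z w, w⟫ := by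
  rw [real_inner_comm, Matrix.inner_toEuclideanCLM]
  exact hZ.dotProduct_mulVec_pos (by simpa using hw)

end Matrix

section MatrixJet

variable {n : ℕ} {Ω : Set (EuclideanSpace ℝ (Fin n))} {u : EuclideanSpace ℝ (Fin n) → ℝ}
  {x p : EuclideanSpace ℝ (Fin n)} {X : Matrix (Fin n) (Fin n) ℝ}

theorem quadForm_eq_dotProduct (X : Matrix (Fin n) (Fin n) ℝ) (h : EuclideanSpace ℝ (Fin n)) :
    quadForm X h = h ⬝ᵥ X.mulVec h := by
  simp only [quadForm, dotProduct, Matrix.mulVec, Finset.mul_sum, mul_comm]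

theorem quadForm_eq_inner_toEuclideanCLM (X : Matrix (Fin n) (Fin n) ℝ)
    (h : EuclideanSpace ℝ (Fin n)) :
    quadForm X h = ⟪Matrix.toEuclideanCLM (𝕜 := ℝ) X h, h⟫ := by
  rw [quadForm_eq_dotProduct, real_inner_comm, Matrix.inner_toEuclideanCLM]

theorem InSuperJet.of_hasSuperjetAt (hu : HasSuperjetAt u p (Matrix.toEuclideanCLM (𝕜 := ℝ) X) x) :
    InSuperJet Ω u x p X := by
  intro κ hκ
  obtain ⟨δ, hδ, hball⟩ := Metric.eventually_nhds_iff_ball.1 (hu κ hκ)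
  refine ⟨δ, hδ, fun h _ hh => ?_⟩
  rw [quadForm_eq_inner_toEuclideanCLM]
  exact hball h (mem_ball_zero_iff.2 hh)

theorem InSuperJet.hasSuperjetAt (hu : InSuperJet univ u x p X) :
    HasSuperjetAt u p (Matrix.toEuclideanCLM (𝕜 := ℝ) X) x := by
  intro κ hκ
  obtain ⟨δ, hδ, hle⟩ := hu κ hκ
  filter_upwards [ball_mem_nhds 0 hδ] with h hh
  rw [← quadForm_eq_inner_toEuclideanCLM]
  exact hle h (mem_univ _) (mem_ball_zero_iff.1 hh)

theorem InClosedSuperJet.of_hasClosedSuperjetAt (hΩ : Ω ∈ 𝓝 x)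
    {X : EuclideanSpace ℝ (Fin n) →L[ℝ] EuclideanSpace ℝ (Fin n)}
    (hu : HasClosedSuperjetAt u p X x) :
    InClosedSuperJet Ω u x p ((Matrix.toEuclideanCLM (𝕜 := ℝ)).symm X) := by
  obtain ⟨xs, ps, Xs, hjet, hxs, huxs, hps, hXs⟩ := hu
  obtain ⟨N, hN⟩ := eventually_atTop.1 (hxs.eventually_mem hΩ)
  have hshift : Tendsto (· + N) atTop atTop := tendsto_add_atTop_nat N
  have hcont : Continuous
      (Matrix.toEuclideanCLM (n := Fin n) (𝕜 := ℝ)).symm.toAlgEquiv.toLinearMap :=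
    LinearMap.continuous_of_finiteDimensional _
  refine ⟨fun k => xs (k + N), fun k => ps (k + N),
    fun k => (Matrix.toEuclideanCLM (𝕜 := ℝ)).symm (Xs (k + N)),
    fun k => ⟨hN _ (Nat.le_add_left N k), .of_hasSuperjetAt ?_⟩, hxs.comp hshift,
    huxs.comp hshift, hps.comp hshift, (hcont.tendsto X).comp (hXs.comp hshift)⟩
  rw [StarAlgEquiv.apply_symm_apply]
  exact hjet (k + N)

theorem quadForm_neg (X : Matrix (Fin n) (Fin n) ℝ) (h : EuclideanSpace ℝ (Fin n)) :
    quadForm (-X) h = -quadForm X h := by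
  simp [quadForm]

theorem InSubJet.of_inSuperJet_neg (hu : InSuperJet Ω (fun y => -u y) x p X) :
    InSubJet Ω u x (-p) (-X) := by
  intro κ hκ
  obtain ⟨δ, hδ, hle⟩ := hu κ hκ
  refine ⟨δ, hδ, fun h hmem hh => ?_⟩
  rw [quadForm_neg, inner_neg_left]
  linarith [hle h hmem hh]

theorem InClosedSubJet.of_inClosedSuperJet_neg (hu : InClosedSuperJet Ω (fun y => -u y) x p X) :
    InClosedSubJet Ω u x (-p) (-X) := by
  obtain ⟨xs, ps, Xs, hjet, hxs, huxs, hps, hXs⟩ := hu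
  exact ⟨xs, fun k => -ps k, fun k => -Xs k, fun k => ⟨(hjet k).1, .of_inSuperJet_neg (hjet k).2⟩,
    hxs, by simpa using huxs.neg, hps.neg, hXs.neg⟩

theorem quadForm_hessianMatrix (φ : EuclideanSpace ℝ (Fin n) → ℝ) (x h : EuclideanSpace ℝ (Fin n)) :
    quadForm (hessianMatrix φ x) h = fderiv ℝ (fderiv ℝ φ) x h h := by
  have hsum : h = ∑ i, h i • EuclideanSpace.single i (1 : ℝ) := by
    simpa using ((EuclideanSpace.basisFun (Fin n) ℝ).sum_repr h).symm
  conv_rhs => rw [hsum]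
  simp only [quadForm, hessianMatrix, iteratedFDeriv_two_apply, Matrix.of_apply, map_sum, map_smul,
    sum_apply, smul_apply, smul_eq_mul, Matrix.cons_val_zero, Matrix.cons_val_one, Finset.mul_sum]
  rw [Finset.sum_comm]
  exact Finset.sum_congr rfl fun i _ => Finset.sum_congr rfl fun j _ => by ring

theorem inSuperJet_gradient_hessianMatrix {φ : EuclideanSpace ℝ (Fin n) → ℝ}
    (hφ : ContDiffAt ℝ 2 φ x) : InSuperJet Ω φ x (gradient φ x) (hessianMatrix φ x) := by
  refine .of_hasSuperjetAt fun κ hκ => ?_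
  have hdiff : ∀ᶠ y in 𝓝 x, DifferentiableAt ℝ φ y :=
    (hφ.eventually (by simp)).mono fun y hy => hy.differentiableAt (by simp)
  have hdiff₂ : DifferentiableAt ℝ (fderiv ℝ φ) x :=
    (hφ.fderiv_right (m := 1) (by norm_num)).differentiableAt (by simp)
  filter_upwards [eventually_le_of_hasFDerivAt_fderiv hdiff hdiff₂.hasFDerivAt hκ] with h hh
  rwa [← quadForm_eq_inner_toEuclideanCLM, quadForm_hessianMatrix, inner_gradient_left]

theorem posSemidef_fromBlocks_add_smul_one {X W : Matrix (Fin n) (Fin n) ℝ} (hX : X.IsHermitian)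
    (hW : W.IsHermitian) {c : ℝ} (hXc : ∀ h, -(c * ‖h‖ ^ 2) ≤ quadForm X h)
    (hWc : ∀ h, -(c * ‖h‖ ^ 2) ≤ quadForm W h) :
    (Matrix.fromBlocks X 0 0 W +
      c • (1 : Matrix (Fin n ⊕ Fin n) (Fin n ⊕ Fin n) ℝ)).PosSemidef := by
  refine .of_dotProduct_mulVec_nonneg
    ((hX.fromBlocks (by simp) hW).add (Matrix.isHermitian_one.smul rfl)) fun w => ?_
  have hXw := hXc (WithLp.toLp 2 (w ∘ Sum.inl))
  have hWw := hWc (WithLp.toLp 2 (w ∘ Sum.inr))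
  have hnorm : w ⬝ᵥ w = ∑ i, (w ∘ Sum.inl) i ^ 2 + ∑ i, (w ∘ Sum.inr) i ^ 2 := by
    simp [dotProduct, Fintype.sum_sum_type, pow_two]
  rw [quadForm_eq_dotProduct, EuclideanSpace.real_norm_sq_eq] at hXw hWw
  rw [star_trivial, Matrix.add_mulVec, dotProduct_add, dotProduct_fromBlocks_mulVec,
    Matrix.smul_mulVec, Matrix.one_mulVec, dotProduct_smul, smul_eq_mul, hnorm,
    Matrix.zero_mulVec, Matrix.zero_mulVec, add_zero, zero_add]
  linarith

theorem posSemidef_fromBlocks_sub_fromBlocks {R X W : Matrix (Fin n) (Fin n) ℝ}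
    (hR : R.IsHermitian) (hX : X.IsHermitian) (hW : W.IsHermitian)
    (hle : ∀ h k, quadForm X h + quadForm W k ≤ quadForm R (h - k)) :
    (Matrix.fromBlocks R (-R) (-R) R - Matrix.fromBlocks X 0 0 W).PosSemidef := by
  refine .of_dotProduct_mulVec_nonneg
    ((hR.fromBlocks hR.neg hR).sub (hX.fromBlocks (by simp) hW)) fun w => ?_
  have hw := hle (WithLp.toLp 2 (w ∘ Sum.inl)) (WithLp.toLp 2 (w ∘ Sum.inr))
  rw [← WithLp.toLp_sub, quadForm_eq_dotProduct, quadForm_eq_dotProduct, quadForm_eq_dotProduct,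
    Matrix.mulVec_sub, dotProduct_sub, sub_dotProduct, sub_dotProduct] at hw
  rw [star_trivial, Matrix.sub_mulVec, dotProduct_sub, dotProduct_fromBlocks_mulVec,
    dotProduct_fromBlocks_mulVec]
  simp only [Matrix.zero_mulVec, Matrix.neg_mulVec, add_zero, zero_add, dotProduct_neg,
    dotProduct_add]
  linarith

end MatrixJet

theorem ishii_lions_general
    {n : ℕ} {Ω : Set (EuclideanSpace ℝ (Fin n))} (hΩ : IsOpen Ω)
    {u v φ : EuclideanSpace ℝ (Fin n) → ℝ} (hu : ContinuousOn u Ω) (hv : ContinuousOn v Ω)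
    {xb yb z : EuclideanSpace ℝ (Fin n)} {Z : Matrix (Fin n) (Fin n) ℝ}
    (hxb : xb ∈ Ω) (hyb : yb ∈ Ω) (hφ : InSuperJet univ φ (xb - yb) z Z)
    (hmax : IsLocalMaxOn
      (fun t : EuclideanSpace ℝ (Fin n) × EuclideanSpace ℝ (Fin n) =>
        u t.1 - v t.2 - φ (t.1 - t.2)) (Ω ×ˢ Ω) (xb, yb))
    {ε : ℝ} (hε : 0 < ε) (hεZ : (1 - ε • Z).PosDef) :
    ∃ X Y : Matrix (Fin n) (Fin n) ℝ, X.IsHermitian ∧ Y.IsHermitian ∧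
      InClosedSuperJet Ω u xb z X ∧ InClosedSubJet Ω v yb z Y ∧
      (Matrix.fromBlocks X 0 0 (-Y) +
        (2 / ε) • (1 : Matrix (Fin n ⊕ Fin n) (Fin n ⊕ Fin n) ℝ)).PosSemidef ∧
      (Matrix.fromBlocks ((1 - ε • Z)⁻¹ * Z) (-((1 - ε • Z)⁻¹ * Z)) (-((1 - ε • Z)⁻¹ * Z))
        ((1 - ε • Z)⁻¹ * Z) - Matrix.fromBlocks X 0 0 (-Y)).PosSemidef := by
  have hZ : Z.IsHermitian := isHermitian_of_one_sub_smul hε.ne' hεZ.isHermitian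
  have hxΩ := hΩ.mem_nhds hxb
  have hyΩ := hΩ.mem_nhds hyb
  have hR : (1 - ε • Matrix.toEuclideanCLM (𝕜 := ℝ) Z) *
      Matrix.toEuclideanCLM (𝕜 := ℝ) ((1 - ε • Z)⁻¹ * Z) = Matrix.toEuclideanCLM (𝕜 := ℝ) Z := by
    rw [one_sub_smul_toEuclideanCLM, ← map_mul,
      Matrix.mul_nonsing_inv_cancel_left _ _ hεZ.det_pos.ne'.isUnit]
  obtain ⟨X, W, hX, hW, hXjet, hWjet, hXlower, hWlower, hXW⟩ :=
    exists_closedSuperjet_of_isLocalMax_sub_comp_sub hε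
      ((hΩ.eventually_mem hxb).mono fun x hx => hu.continuousAt (hΩ.mem_nhds hx))
      ((hΩ.eventually_mem hyb).mono fun y hy => hv.continuousAt (hΩ.mem_nhds hy))
      hφ.hasSuperjetAt (hmax.isLocalMax (prod_mem_nhds hxΩ hyΩ))
      (isSymmetric_toEuclideanCLM_iff.2 hZ)
      (fun w hw => one_sub_smul_toEuclideanCLM Z ε ▸ inner_toEuclideanCLM_self_pos hεZ hw) hR
  obtain ⟨X, rfl⟩ := EquivLike.surjective (Matrix.toEuclideanCLM (𝕜 := ℝ)) X
  obtain ⟨W, rfl⟩ := EquivLike.surjective (Matrix.toEuclideanCLM (𝕜 := ℝ)) W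
  rw [isSymmetric_toEuclideanCLM_iff] at hX hW
  simp only [← quadForm_eq_inner_toEuclideanCLM] at hXlower hWlower hXW
  refine ⟨X, -W, hX, hW.neg, ?_, ?_, ?_, ?_⟩
  · simpa using InClosedSuperJet.of_hasClosedSuperjetAt hxΩ hXjet
  · simpa using InClosedSubJet.of_inClosedSuperJet_neg (.of_hasClosedSuperjetAt hyΩ hWjet)
  · rw [neg_neg]
    exact posSemidef_fromBlocks_add_smul_one hX hW hXlower hWlower
  · rw [neg_neg]
    exact posSemidef_fromBlocks_sub_fromBlocks (isHermitian_inv_one_sub_smul_mul hZ ε) hX hW hXW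

theorem ishii_lions
    (n : ℕ) (hn : 1 ≤ n) (Ω : Set (EuclideanSpace ℝ (Fin n))) (hΩ : IsOpen Ω)
    (u v : EuclideanSpace ℝ (Fin n) → ℝ) (hu : ContinuousOn u Ω) (hv : ContinuousOn v Ω)
    (φ : EuclideanSpace ℝ (Fin n) → ℝ) (hφ : ContDiff ℝ 2 φ)
    (xb yb : EuclideanSpace ℝ (Fin n)) (hxb : xb ∈ Ω) (hyb : yb ∈ Ω)
    (hmax : IsLocalMaxOn
      (fun t : EuclideanSpace ℝ (Fin n) × EuclideanSpace ℝ (Fin n) =>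
        u t.1 - v t.2 - φ (t.1 - t.2)) (Ω ×ˢ Ω) (xb, yb))
    (ε : ℝ) (hε : 0 < ε)
    (hεZ : ((1 : Matrix (Fin n) (Fin n) ℝ) - ε • hessianMatrix φ (xb - yb)).PosDef) :
    ∃ X Y : Matrix (Fin n) (Fin n) ℝ, X.IsHermitian ∧ Y.IsHermitian ∧
      InClosedSuperJet Ω u xb (gradient φ (xb - yb)) X ∧
      InClosedSubJet Ω v yb (gradient φ (xb - yb)) Y ∧
      (Matrix.fromBlocks X 0 0 (-Y) +
        (2 / ε) • (1 : Matrix (Fin n ⊕ Fin n) (Fin n ⊕ Fin n) ℝ)).PosSemidef ∧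
      (Matrix.fromBlocks
          (((1 : Matrix (Fin n) (Fin n) ℝ) - ε • hessianMatrix φ (xb - yb))⁻¹ *
            hessianMatrix φ (xb - yb))
          (-(((1 : Matrix (Fin n) (Fin n) ℝ) - ε • hessianMatrix φ (xb - yb))⁻¹ *
            hessianMatrix φ (xb - yb)))
          (-(((1 : Matrix (Fin n) (Fin n) ℝ) - ε • hessianMatrix φ (xb - yb))⁻¹ *
            hessianMatrix φ (xb - yb)))
          (((1 : Matrix (Fin n) (Fin n) ℝ) - ε • hessianMatrix φ (xb - yb))⁻¹ *
            hessianMatrix φ (xb - yb)) -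
        Matrix.fromBlocks X 0 0 (-Y)).PosSemidef := by
  exact ishii_lions_general hΩ hu hv hxb hyb
    (inSuperJet_gradient_hessianMatrix hφ.contDiffAt) hmax hε hεZ
end

section
/- Let n ≥ 1, −1 < p ≤ q, γ = q − p, 0 < λ < Λ, C₀ > 0, Ω ⊂ ℝⁿ, and let F : S(n)×ℝⁿ×Ω → ℝ satisfy, for all x ∈ Ω, M, N ∈ S(n), and z, w ∈ ℝⁿ with |z| ≥ C₀, |w| ≥ C₀: F(0,z,x) = 0; (A1) M⁻_{λ|z|^p,Λ(|z|^p+|z|^q)}(N) ≤ F(M+N,z,x) − F(M,z,x) ≤ M⁺_{λ|z|^p,Λ(|z|^p+|z|^q)}(N); and (A2) |F(M,z,x) − F(M,w,x)| ≤ Λ|z−w|(|z|^{q−1}+|w|^{q−1})(‖M‖+1) whenever |w|/2 ≤ |z| ≤ 2|w|. Then there exists C = C(n,p,q,C₀) > 0 such that for all M ∈ S(n), x ∈ Ω, and all z, w ∈ ℝⁿ with |z| ≥ C₀, |w| ≥ C₀, and |w|/2 ≤ |z| ≤ 2|w|, the rescaled operator F̃(M,z,x) := |z|^{−p}F(M,z,x)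 satisfies |F̃(M,z,x) − F̃(M,w,x)| ≤ C·Λ·|z−w|(|z|^{γ−1}+|w|^{γ−1})(1+‖M‖). -/
open Metric Set
noncomputable def pucciPlus {n : ℕ} (lam Lam : ℝ) (N : Matrix (Fin n) (Fin n) ℝ) : ℝ :=
  if h : N.IsHermitian then
    ∑ i, if 0 < h.eigenvalues i then Lam * h.eigenvalues i else lam * h.eigenvalues i
  else 0

noncomputable def pucciMinus {n : ℕ} (lam Lam : ℝ) (N : Matrix (Fin n) (Fin n) ℝ) : ℝ :=
  if h : N.IsHermitian then
    ∑ i, if 0 < h.eigenvalues i then lam * h.eigenvalues i else Lam * h.eigenvalues i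
  else 0

noncomputable def opNorm {n : ℕ} (M : Matrix (Fin n) (Fin n) ℝ) : ℝ :=
  ‖Matrix.toEuclideanCLM (𝕜 := ℝ) M‖

/-- Condition (A1): `(p,q)`-growth of `F`. -/
def CondA1 {n : ℕ} (Ω : Set (EuclideanSpace ℝ (Fin n)))
    (F : Matrix (Fin n) (Fin n) ℝ → EuclideanSpace ℝ (Fin n) → EuclideanSpace ℝ (Fin n) → ℝ)
    (lam Lam p q C₀ : ℝ) : Prop :=
  ∀ x ∈ Ω, ∀ z : EuclideanSpace ℝ (Fin n), C₀ ≤ ‖z‖ →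
    ∀ M N : Matrix (Fin n) (Fin n) ℝ, M.IsHermitian → N.IsHermitian →
      pucciMinus (lam * ‖z‖ ^ p) (Lam * (‖z‖ ^ p + ‖z‖ ^ q)) N ≤ F (M + N) z x - F M z x ∧
      F (M + N) z x - F M z x ≤ pucciPlus (lam * ‖z‖ ^ p) (Lam * (‖z‖ ^ p + ‖z‖ ^ q)) N

/-- Condition (A2): Lipschitz continuity of `F` in the gradient variable. -/
def CondA2 {n : ℕ} (Ω : Set (EuclideanSpace ℝ (Fin n)))
    (F : Matrix (Fin n) (Fin n) ℝ → EuclideanSpace ℝ (Fin n) → EuclideanSpace ℝ (Fin n) → ℝ)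
    (Lam q C₀ : ℝ) : Prop :=
  ∀ x ∈ Ω, ∀ z w : EuclideanSpace ℝ (Fin n), C₀ ≤ ‖z‖ → C₀ ≤ ‖w‖ →
    ‖w‖ / 2 ≤ ‖z‖ → ‖z‖ ≤ 2 * ‖w‖ →
    ∀ M : Matrix (Fin n) (Fin n) ℝ, M.IsHermitian →
      |F M z x - F M w x| ≤ Lam * ‖z - w‖ * (‖z‖ ^ (q - 1) + ‖w‖ ^ (q - 1)) * (opNorm M + 1)

/-- Condition (A3): Hölder continuity of `F` in the space variable. -/
def CondA3 {n : ℕ} (Ω : Set (EuclideanSpace ℝ (Fin n)))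
    (F : Matrix (Fin n) (Fin n) ℝ → EuclideanSpace ℝ (Fin n) → EuclideanSpace ℝ (Fin n) → ℝ)
    (Lam q α C₀ : ℝ) : Prop :=
  ∀ x ∈ Ω, ∀ y ∈ Ω, ∀ z : EuclideanSpace ℝ (Fin n), C₀ ≤ ‖z‖ →
    ∀ M : Matrix (Fin n) (Fin n) ℝ, M.IsHermitian →
      |F M z x - F M z y| ≤ Lam * ‖x - y‖ ^ α * ‖z‖ ^ q * (opNorm M + 1)

/-- Condition (A4): normalization of `F` and growth of `f`. -/
def CondA4 {n : ℕ} (Ω : Set (EuclideanSpace ℝ (Fin n)))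
    (F : Matrix (Fin n) (Fin n) ℝ → EuclideanSpace ℝ (Fin n) → EuclideanSpace ℝ (Fin n) → ℝ)
    (f : EuclideanSpace ℝ (Fin n) → EuclideanSpace ℝ (Fin n) → ℝ)
    (q C₀ Cf : ℝ) : Prop :=
  (∀ x ∈ Ω, ∀ z : EuclideanSpace ℝ (Fin n), C₀ ≤ ‖z‖ → F 0 z x = 0) ∧
  (∀ x ∈ Ω, ∀ z : EuclideanSpace ℝ (Fin n), |f x z| ≤ Cf * (1 + ‖z‖ ^ (q + 1)))

/-!
Writing `f = F M z x` and `g = F M w x`, split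
`|z|^(-p) f - |w|^(-p) g = |z|^(-p) (f - g) + (|z|^(-p) - |w|^(-p)) g`.
The first term is controlled by (A2), because powers of `|z|` and `|w|` are comparable. For the
second, the mean value theorem bounds the difference of powers by a multiple of
`|w|^(-p-1) |z - w|`, while (A1) compared with `F 0 w x = 0` gives
`|g| ≤ n Λ (|w|^p + |w|^q) ‖M‖`. The surplus term `|w|^(-p-1) |w|^p = |w|^(-1)` is
absorbed into `|w|^(q-p-1)` using `|w| ≥ C₀` and `q ≥ p`.
-/

section RealPowers

variable {κ a b : ℝ}

theorem rpow_le_rpow_abs_mul_rpow (hκ : 0 < κ) (hb : 0 < b) (hab : a ∈ Icc (b / κ) (κ * b))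
    (r : ℝ) : a ^ r ≤ κ ^ |r| * b ^ r := by
  have hbκ : 0 < b / κ := by positivity
  rcases le_total 0 r with hr | hr
  · calc a ^ r ≤ (κ * b) ^ r := Real.rpow_le_rpow (hbκ.le.trans hab.1) hab.2 hr
      _ = κ ^ |r| * b ^ r := by rw [Real.mul_rpow hκ.le hb.le, abs_of_nonneg hr]
  · calc a ^ r ≤ (b / κ) ^ r := Real.rpow_le_rpow_of_nonpos hbκ hab.1 hr
      _ = κ ^ |r| * b ^ r := by
        rw [Real.div_rpow hb.le hκ.le, abs_of_nonpos hr, Real.rpow_neg hκ.le, div_eq_inv_mul]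

theorem abs_rpow_sub_rpow_le (hκ : 1 ≤ κ) (hb : 0 < b) (hab : a ∈ Icc (b / κ) (κ * b)) (r : ℝ) :
    |a ^ r - b ^ r| ≤ |r| * (κ ^ |r - 1| * b ^ (r - 1)) * |a - b| := by
  have hκ₀ : 0 < κ := one_pos.trans_le hκ
  have pos_of_mem : ∀ t ∈ Icc (b / κ) (κ * b), 0 < t := fun t ht => (div_pos hb hκ₀).trans_le ht.1
  refine (convex_Icc (b / κ) (κ * b)).norm_image_sub_le_of_norm_hasDerivWithin_le
    (fun t ht => (Real.hasDerivAt_rpow_const (Or.inl (pos_of_mem t ht).ne')).hasDerivWithinAt)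
    (fun t ht => ?_) ⟨div_le_self hb.le hκ, le_mul_of_one_le_left hb.le hκ⟩ hab
  rw [norm_mul, Real.norm_eq_abs, Real.norm_of_nonneg (Real.rpow_nonneg (pos_of_mem t ht).le _)]
  gcongr
  exact rpow_le_rpow_abs_mul_rpow hκ₀ hb ht _

theorem rpow_neg_mul_rpow_add_rpow_le (hκ : 1 ≤ κ) (hb : 0 < b) (hab : a ∈ Icc (b / κ) (κ * b))
    (p s : ℝ) : a ^ (-p) * (a ^ s + b ^ s) ≤ κ ^ |p| * (a ^ (s - p) + b ^ (s - p)) := by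
  have hκ₀ : 0 < κ := one_pos.trans_le hκ
  have ha : 0 < a := (div_pos hb hκ₀).trans_le hab.1
  have rpow_split : ∀ t : ℝ, 0 < t → t ^ (s - p) = t ^ (-p) * t ^ s := fun t ht => by
    rw [← Real.rpow_add ht, neg_add_eq_sub]
  have one_le : 1 ≤ κ ^ |p| := Real.one_le_rpow hκ (abs_nonneg p)
  have compare : a ^ (-p) ≤ κ ^ |p| * b ^ (-p) := by
    simpa only [abs_neg] using rpow_le_rpow_abs_mul_rpow hκ₀ hb hab (-p)
  calc a ^ (-p) * (a ^ s + b ^ s) = 1 * a ^ (s - p) + a ^ (-p) * b ^ s := by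
        rw [rpow_split a ha]; ring
    _ ≤ κ ^ |p| * a ^ (s - p) + κ ^ |p| * b ^ (-p) * b ^ s := by gcongr
    _ = κ ^ |p| * (a ^ (s - p) + b ^ (s - p)) := by rw [rpow_split b hb]; ring

theorem rpow_mul_rpow_add_rpow_le {c p q : ℝ} (hc : 0 < c) (hcb : c ≤ b) (hpq : p ≤ q) (s : ℝ) :
    b ^ s * (b ^ p + b ^ q) ≤ (1 + c ^ (p - q)) * b ^ (q + s) := by
  have hb : 0 < b := hc.trans_le hcb
  calc b ^ s * (b ^ p + b ^ q) = (1 + b ^ (p - q)) * b ^ (q + s) := by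
        rw [mul_add, add_mul, one_mul, ← Real.rpow_add hb, ← Real.rpow_add hb, ← Real.rpow_add hb,
          add_comm s q, show p - q + (q + s) = s + p by ring, add_comm]
    _ ≤ (1 + c ^ (p - q)) * b ^ (q + s) := by
        have := Real.rpow_le_rpow_of_nonpos hc hcb (sub_nonpos.2 hpq)
        gcongr

theorem abs_rpow_neg_sub_rpow_neg_mul_le {c p q : ℝ} (hκ : 1 ≤ κ) (hc : 0 < c) (hcb : c ≤ b)
    (hab : a ∈ Icc (b / κ) (κ * b)) (hpq : p ≤ q) :
    |a ^ (-p) - b ^ (-p)| * (b ^ p + b ^ q) ≤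
      |p| * κ ^ |p + 1| * (1 + c ^ (p - q)) * |a - b| * b ^ (q - p - 1) := by
  have hb : 0 < b := hc.trans_le hcb
  have mean_value : |a ^ (-p) - b ^ (-p)| ≤ |p| * (κ ^ |p + 1| * b ^ (-(p + 1))) * |a - b| := by
    simpa only [← neg_add', abs_neg] using abs_rpow_sub_rpow_le hκ hb hab (-p)
  calc |a ^ (-p) - b ^ (-p)| * (b ^ p + b ^ q)
      ≤ |p| * (κ ^ |p + 1| * b ^ (-(p + 1))) * |a - b| * (b ^ p + b ^ q) := by gcongr
    _ = |p| * κ ^ |p + 1| * |a - b| * (b ^ (-(p + 1)) * (b ^ p + b ^ q)) := by ring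
    _ ≤ |p| * κ ^ |p + 1| * |a - b| * ((1 + c ^ (p - q)) * b ^ (q + -(p + 1))) := by
        gcongr |p| * κ ^ |p + 1| * |a - b| * ?_
        exact rpow_mul_rpow_add_rpow_le hc hcb hpq _
    _ = |p| * κ ^ |p + 1| * (1 + c ^ (p - q)) * |a - b| * b ^ (q - p - 1) := by
        rw [← sub_eq_add_neg, ← sub_sub]; ring

theorem norm_rpow_neg_smul_sub_le {E : Type*} [SeminormedAddCommGroup E] [NormedSpace ℝ E]
    {f g : E} {c p q A B : ℝ} (hκ : 1 ≤ κ) (hc : 0 < c) (hcb : c ≤ b)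
    (hab : a ∈ Icc (b / κ) (κ * b)) (hpq : p ≤ q)
    (hfg : ‖f - g‖ ≤ A * (a ^ (q - 1) + b ^ (q - 1))) (hg : ‖g‖ ≤ B * (b ^ p + b ^ q)) :
    ‖a ^ (-p) • f - b ^ (-p) • g‖ ≤
      (κ ^ |p| * A + |p| * κ ^ |p + 1| * (1 + c ^ (p - q)) * B * |a - b|) *
        (a ^ (q - p - 1) + b ^ (q - p - 1)) := by
  have hb : 0 < b := hc.trans_le hcb
  have ha : 0 < a := (div_pos hb (one_pos.trans_le hκ)).trans_le hab.1
  have hA : 0 ≤ A := nonneg_of_mul_nonneg_left ((norm_nonneg _).trans hfg) (by positivity)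
  have hB : 0 ≤ B := nonneg_of_mul_nonneg_left ((norm_nonneg _).trans hg) (by positivity)
  have value_term : a ^ (-p) * ‖f - g‖ ≤
      κ ^ |p| * A * (a ^ (q - p - 1) + b ^ (q - p - 1)) :=
    calc a ^ (-p) * ‖f - g‖ ≤ a ^ (-p) * (A * (a ^ (q - 1) + b ^ (q - 1))) := by gcongr
      _ = A * (a ^ (-p) * (a ^ (q - 1) + b ^ (q - 1))) := by ring
      _ ≤ A * (κ ^ |p| * (a ^ (q - 1 - p) + b ^ (q - 1 - p))) := by
        gcongr A * ?_
        exact rpow_neg_mul_rpow_add_rpow_le hκ hb hab p (q - 1)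
      _ = κ ^ |p| * A * (a ^ (q - p - 1) + b ^ (q - p - 1)) := by rw [sub_right_comm]; ring
  have weight_term : |a ^ (-p) - b ^ (-p)| * ‖g‖ ≤
      |p| * κ ^ |p + 1| * (1 + c ^ (p - q)) * B * |a - b| * (a ^ (q - p - 1) + b ^ (q - p - 1)) :=
    calc |a ^ (-p) - b ^ (-p)| * ‖g‖ ≤ |a ^ (-p) - b ^ (-p)| * (B * (b ^ p + b ^ q)) := by gcongr
      _ = B * (|a ^ (-p) - b ^ (-p)| * (b ^ p + b ^ q)) := by ring
      _ ≤ B * (|p| * κ ^ |p + 1| * (1 + c ^ (p - q)) * |a - b| * b ^ (q - p - 1)) := by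
        gcongr B * ?_
        exact abs_rpow_neg_sub_rpow_neg_mul_le hκ hc hcb hab hpq
      _ = |p| * κ ^ |p + 1| * (1 + c ^ (p - q)) * B * |a - b| * b ^ (q - p - 1) := by ring
      _ ≤ _ := by
        gcongr
        exact le_add_of_nonneg_left (by positivity)
  calc ‖a ^ (-p) • f - b ^ (-p) • g‖
      = ‖a ^ (-p) • (f - g) + (a ^ (-p) - b ^ (-p)) • g‖ := by
        rw [smul_sub, sub_smul, sub_add_sub_cancel]
    _ ≤ a ^ (-p) * ‖f - g‖ + |a ^ (-p) - b ^ (-p)| * ‖g‖ := by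
        refine (norm_add_le _ _).trans_eq ?_
        rw [norm_smul, norm_smul, Real.norm_of_nonneg (by positivity), Real.norm_eq_abs]
    _ ≤ _ := (add_le_add value_term weight_term).trans_eq (add_mul _ _ _).symm

end RealPowers

section Pucci

variable {n : ℕ} {N : Matrix (Fin n) (Fin n) ℝ} {lam Lam : ℝ}

theorem abs_eigenvalues_le_opNorm (hN : N.IsHermitian) (i : Fin n) :
    |hN.eigenvalues i| ≤ opNorm N := by
  have : Nonempty (Fin n) := ⟨i⟩
  refine spectrum.norm_le_norm_of_mem (𝕜 := ℝ) (a := Matrix.toEuclideanCLM (𝕜 := ℝ) N) ?_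
  rw [AlgEquiv.spectrum_eq]
  exact hN.eigenvalues_mem_spectrum_real i

theorem pucciPlus_le (hlam : 0 ≤ lam) (hLam : 0 ≤ Lam) (hN : N.IsHermitian) :
    pucciPlus lam Lam N ≤ n * (Lam * opNorm N) := by
  have term_le : ∀ i, (if 0 < hN.eigenvalues i then Lam * hN.eigenvalues i
      else lam * hN.eigenvalues i) ≤ Lam * opNorm N := fun i => by
    split_ifs with hi
    · exact mul_le_mul_of_nonneg_left (le_of_abs_le (abs_eigenvalues_le_opNorm hN i)) hLam
    · exact (mul_nonpos_of_nonneg_of_nonpos hlam (not_lt.1 hi)).trans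
        (mul_nonneg hLam (norm_nonneg _))
  rw [pucciPlus, dif_pos hN]
  simpa using Finset.sum_le_card_nsmul Finset.univ _ _ fun i _ => term_le i

theorem neg_le_pucciMinus (hlam : 0 ≤ lam) (hLam : 0 ≤ Lam) (hN : N.IsHermitian) :
    -(n * (Lam * opNorm N)) ≤ pucciMinus lam Lam N := by
  have le_term : ∀ i, -(Lam * opNorm N) ≤ (if 0 < hN.eigenvalues i then lam * hN.eigenvalues i
      else Lam * hN.eigenvalues i) := fun i => by
    split_ifs with hi
    · exact (neg_nonpos.2 (mul_nonneg hLam (norm_nonneg _))).trans (mul_nonneg hlam hi.le)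
    · rw [← mul_neg]
      exact mul_le_mul_of_nonneg_left (neg_le_of_abs_le (abs_eigenvalues_le_opNorm hN i)) hLam
  rw [pucciMinus, dif_pos hN]
  simpa using Finset.card_nsmul_le_sum Finset.univ _ _ fun i _ => le_term i

end Pucci

section Operator

variable {n : ℕ} {Ω : Set (EuclideanSpace ℝ (Fin n))}
  {F : Matrix (Fin n) (Fin n) ℝ → EuclideanSpace ℝ (Fin n) → EuclideanSpace ℝ (Fin n) → ℝ}
  {lam Lam p q C₀ : ℝ} {M : Matrix (Fin n) (Fin n) ℝ} {x z w : EuclideanSpace ℝ (Fin n)}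

theorem CondA1.abs_apply_le (hA1 : CondA1 Ω F lam Lam p q C₀) (hlam : 0 ≤ lam) (hLam : 0 ≤ Lam)
    (hM : M.IsHermitian) (hx : x ∈ Ω) (hz : C₀ ≤ ‖z‖) (hF : F 0 z x = 0) :
    |F M z x| ≤ n * (Lam * (‖z‖ ^ p + ‖z‖ ^ q) * opNorm M) := by
  have ⟨lower, upper⟩ := hA1 x hx z hz 0 M Matrix.isHermitian_zero hM
  rw [zero_add, hF, sub_zero] at lower upper
  exact abs_le.2 ⟨(neg_le_pucciMinus (by positivity) (by positivity) hM).trans lower,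
    upper.trans (pucciPlus_le (by positivity) (by positivity) hM)⟩

theorem rescaled_operator_gradient_lipschitz_general (hpq : p ≤ q) (hC₀ : 0 < C₀) (hlam : 0 ≤ lam)
    (hLam : 0 ≤ Lam) (hF : ∀ x ∈ Ω, ∀ z : EuclideanSpace ℝ (Fin n), C₀ ≤ ‖z‖ → F 0 z x = 0)
    (hA1 : CondA1 Ω F lam Lam p q C₀) (hA2 : CondA2 Ω F Lam q C₀) (hM : M.IsHermitian)
    (hx : x ∈ Ω) (hz : C₀ ≤ ‖z‖) (hw : C₀ ≤ ‖w‖) (hwz : ‖w‖ / 2 ≤ ‖z‖) (hzw : ‖z‖ ≤ 2 * ‖w‖) :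
    |‖z‖ ^ (-p) * F M z x - ‖w‖ ^ (-p) * F M w x| ≤
      (2 ^ |p| + |p| * 2 ^ |p + 1| * (1 + C₀ ^ (p - q)) * n) * Lam * ‖z - w‖ *
        (‖z‖ ^ (q - p - 1) + ‖w‖ ^ (q - p - 1)) * (1 + opNorm M) := by
  have hopNorm : 0 ≤ opNorm M := norm_nonneg _
  have lipschitz : |F M z x - F M w x| ≤
      Lam * ‖z - w‖ * (1 + opNorm M) * (‖z‖ ^ (q - 1) + ‖w‖ ^ (q - 1)) :=
    (hA2 x hx z w hz hw hwz hzw M hM).trans_eq (by ring)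
  have growth : |F M w x| ≤ n * Lam * opNorm M * (‖w‖ ^ p + ‖w‖ ^ q) :=
    (hA1.abs_apply_le hlam hLam hM hx hw (hF x hx w hw)).trans_eq (by ring)
  calc |‖z‖ ^ (-p) * F M z x - ‖w‖ ^ (-p) * F M w x|
      ≤ (2 ^ |p| * (Lam * ‖z - w‖ * (1 + opNorm M)) + |p| * 2 ^ |p + 1| * (1 + C₀ ^ (p - q)) *
          (n * Lam * opNorm M) * |‖z‖ - ‖w‖|) * (‖z‖ ^ (q - p - 1) + ‖w‖ ^ (q - p - 1)) :=
        norm_rpow_neg_smul_sub_le (f := F M z x) (g := F M w x) one_le_two hC₀ hw ⟨hwz, hzw⟩ hpq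
          lipschitz growth
    _ ≤ (2 ^ |p| * (Lam * ‖z - w‖ * (1 + opNorm M)) + |p| * 2 ^ |p + 1| * (1 + C₀ ^ (p - q)) *
          (n * Lam * (1 + opNorm M)) * ‖z - w‖) * (‖z‖ ^ (q - p - 1) + ‖w‖ ^ (q - p - 1)) := by
        gcongr
        · exact le_add_of_nonneg_left zero_le_one
        · exact abs_norm_sub_norm_le z w
    _ = _ := by ring

end Operator

theorem rescaled_operator_gradient_lipschitz
    (n : ℕ) (hn : 1 ≤ n) (p q C₀ : ℝ) (hp : -1 < p) (hpq : p ≤ q) (hC₀ : 0 < C₀) :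
    ∃ C : ℝ, 0 < C ∧
      ∀ (lam Lam : ℝ) (Ω : Set (EuclideanSpace ℝ (Fin n)))
        (F : Matrix (Fin n) (Fin n) ℝ → EuclideanSpace ℝ (Fin n) →
          EuclideanSpace ℝ (Fin n) → ℝ),
        0 < lam → lam < Lam →
        (∀ x ∈ Ω, ∀ z : EuclideanSpace ℝ (Fin n), C₀ ≤ ‖z‖ → F 0 z x = 0) →
        CondA1 Ω F lam Lam p q C₀ →
        CondA2 Ω F Lam q C₀ →
        ∀ M : Matrix (Fin n) (Fin n) ℝ, M.IsHermitian → ∀ x ∈ Ω,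
          ∀ z w : EuclideanSpace ℝ (Fin n), C₀ ≤ ‖z‖ → C₀ ≤ ‖w‖ →
            ‖w‖ / 2 ≤ ‖z‖ → ‖z‖ ≤ 2 * ‖w‖ →
            |‖z‖ ^ (-p) * F M z x - ‖w‖ ^ (-p) * F M w x| ≤
              C * Lam * ‖z - w‖ * (‖z‖ ^ (q - p - 1) + ‖w‖ ^ (q - p - 1)) * (1 + opNorm M) := by
  exact ⟨2 ^ |p| + |p| * 2 ^ |p + 1| * (1 + C₀ ^ (p - q)) * n, by positivity,
    fun _ _ _ _ hlam hLam hF hA1 hA2 _ hM _ hx _ _ => rescaled_operator_gradient_lipschitz_general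
      hpq hC₀ hlam.le (hlam.trans hLam).le hF hA1 hA2 hM hx⟩
end

section
/- Let n ≥ 1, let a ∈ ℝⁿ be a unit vector, and let L₁ > 0, δ > 0, κ ∈ (0,1). Define Z = L₁δ^{κ−2}·((κ−1)·a aᵀ + (I − a aᵀ)) and ε = δ^{2−κ}/(2L₁). Then I − εZ is invertible and Z^ε := (I − εZ)^{−1}Z = L₁δ^{κ−2}·( (2(κ−1)/(3−κ))·a aᵀ + 2(I − a aᵀ) ). Moreover, if X, Y ∈ S(n) satisfy, in the Loewner order on 2n×2n symmetric matrices, −(2/ε)·[[I,0],[0,I]] ≤ [[X,0],[0,−Y]] ≤ [[Z^ε,−Z^ε],[−Z^ε,Z^ε]], then ‖X‖ ≤ 4L₁δ^{κ−2} and ‖Y‖ ≤ 4L₁δ^{κ−2}. -/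
open Metric Set
/-!
`Z` is the combination `x • P + y • (1 - P)` of the complementary projections `P = a aᵀ` and
`1 - P`, so `Z ↦ (1 - ε Z)⁻¹ Z` acts on the two coefficients separately by `t ↦ t / (1 - ε t)`.
With `c = L₁ δ ^ (κ - 2)` and `ε = 1 / (2 c)` both coefficients of the result are at most
`4 c = 2 / ε`, as long as `κ ≤ 7 / 3`. The diagonal blocks of the matrix inequalities therefore
place `X` and `-Y` between `-4 c` and `4 c`, and a symmetric matrix in that range has operator norm
at most `4 c`.
-/

section ComplementaryIdempotents

variable {R k A : Type*} [CommRing R] [Field k] [Ring A] [Algebra R A] [Algebra k A] {p : A}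

theorem smul_add_smul_one_sub_mul (hp : IsIdempotentElem p) (x y u v : R) :
    (x • p + y • (1 - p)) * (u • p + v • (1 - p)) = (x * u) • p + (y * v) • (1 - p) := by
  simp only [add_mul, mul_add, smul_mul_smul_comm, hp.eq, hp.mul_one_sub_self,
    hp.one_sub_mul_self, hp.one_sub.eq, smul_zero, add_zero, zero_add]

theorem isUnit_smul_add_smul_one_sub (hp : IsIdempotentElem p) {x y : k} (hx : x ≠ 0)
    (hy : y ≠ 0) : IsUnit (x • p + y • (1 - p)) := by
  refine isUnit_iff_exists.mpr ⟨x⁻¹ • p + y⁻¹ • (1 - p), ?_, ?_⟩ <;>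
    simp [smul_add_smul_one_sub_mul hp, hx, hy]

theorem inverse_smul_add_smul_one_sub_mul (hp : IsIdempotentElem p) {x y : k} (hx : x ≠ 0)
    (hy : y ≠ 0) (u v : k) :
    Ring.inverse (x • p + y • (1 - p)) * (u • p + v • (1 - p)) =
      (u / x) • p + (v / y) • (1 - p) := by
  rw [Ring.inverse_mul_eq_iff_eq_mul _ _ _ (isUnit_smul_add_smul_one_sub hp hx hy),
    smul_add_smul_one_sub_mul hp, mul_div_cancel₀ _ hx, mul_div_cancel₀ _ hy]

variable [NeZero (2 : k)] {r c κ : k}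

theorem one_sub_smul_eq_of_mul_eq_half (p : A) (hrc : r * c = 1 / 2) :
    1 - r • c • ((κ - 1) • p + (1 - p)) = ((3 - κ) / 2) • p + (1 / 2 : k) • (1 - p) := by
  rw [smul_smul, hrc]
  match_scalars <;> field

theorem isUnit_one_sub_smul_of_mul_eq_half (hp : IsIdempotentElem p) (hrc : r * c = 1 / 2)
    (hκ : 3 - κ ≠ 0) : IsUnit (1 - r • c • ((κ - 1) • p + (1 - p))) := by
  rw [one_sub_smul_eq_of_mul_eq_half p hrc]
  exact isUnit_smul_add_smul_one_sub hp (div_ne_zero hκ two_ne_zero)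
    (one_div_ne_zero two_ne_zero)

theorem inverse_one_sub_smul_mul_self_of_mul_eq_half (hp : IsIdempotentElem p)
    (hrc : r * c = 1 / 2) (hκ : 3 - κ ≠ 0) :
    Ring.inverse (1 - r • c • ((κ - 1) • p + (1 - p))) * (c • ((κ - 1) • p + (1 - p))) =
      c • ((2 * (κ - 1) / (3 - κ)) • p + (2 : k) • (1 - p)) := by
  have hinv := inverse_smul_add_smul_one_sub_mul hp (div_ne_zero hκ two_ne_zero)
    (one_div_ne_zero two_ne_zero) (κ - 1) 1
  rw [one_smul, one_div_one_div, div_div_eq_mul_div, mul_comm (κ - 1)] at hinv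
  rw [one_sub_smul_eq_of_mul_eq_half p hrc, mul_smul_comm, hinv]

end ComplementaryIdempotents

section NumericalRadius

variable {𝕜 E : Type*} [RCLike 𝕜] [NormedAddCommGroup E] [InnerProductSpace 𝕜 E]

theorem norm_le_of_abs_reApplyInnerSelf_le {T : E →L[𝕜] E} (hT : T.IsSymmetric) {C : ℝ}
    (hC : 0 ≤ C) (h : ∀ x, |T.reApplyInnerSelf x| ≤ C * ‖x‖ ^ 2) : ‖T‖ ≤ C := by
  rw [T.norm_eq_iSup_rayleighQuotient hT]
  refine ciSup_le fun x => ?_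
  rw [abs_div, abs_sq]
  exact div_le_of_le_mul₀ (sq_nonneg _) hC (h x)

end NumericalRadius

section StarProjection

variable {k A : Type*} [Ring k] [PartialOrder k] [Ring A] [StarRing A] [PartialOrder A]
  [StarOrderedRing A] [Module k A] [SMulPosMono k A]

theorem smul_add_smul_one_sub_le_smul_one {p : A} (hp : IsStarProjection p) {x y s : k}
    (hx : x ≤ s) (hy : y ≤ s) : x • p + y • (1 - p) ≤ s • (1 : A) :=
  calc
    x • p + y • (1 - p) ≤ s • p + s • (1 - p) :=
      add_le_add (smul_le_smul_of_nonneg_right hx hp.nonneg)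
        (smul_le_smul_of_nonneg_right hy hp.one_sub_nonneg)
    _ = s • 1 := by rw [← smul_add, add_sub_cancel]

end StarProjection

theorem two_mul_sub_one_div_three_sub_le_four_iff {κ : ℝ} (hκ : κ < 3) :
    2 * (κ - 1) / (3 - κ) ≤ 4 ↔ κ ≤ 7 / 3 := by
  rw [div_le_iff₀ (sub_pos.mpr hκ)]
  constructor <;> intro h <;> linarith

section LoewnerOrder

open Matrix
open scoped ComplexOrder MatrixOrder Matrix.Norms.L2Operator

variable {𝕜 ι m n : Type*} [RCLike 𝕜] [Fintype ι]

theorem isStarProjection_vecMulVec_star {a : EuclideanSpace 𝕜 ι} (ha : ‖a‖ = 1) :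
    IsStarProjection (vecMulVec a.ofLp (star a.ofLp)) where
  isIdempotentElem := by
    have star_dotProduct_self : star a.ofLp ⬝ᵥ a.ofLp = 1 := by
      rw [dotProduct_comm, ← EuclideanSpace.inner_eq_star_dotProduct, inner_self_eq_norm_sq_to_K,
        ha, RCLike.ofReal_one, one_pow]
    rw [IsIdempotentElem, vecMulVec_mul_vecMulVec, star_dotProduct_self, one_smul]
  isSelfAdjoint := by
    rw [IsSelfAdjoint, star_eq_conjTranspose, conjTranspose_vecMulVec, star_star]

theorem reApplyInnerSelf_toEuclideanCLM_mono [DecidableEq ι] {A B : Matrix ι ι 𝕜} (hAB : A ≤ B)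
    (x : EuclideanSpace 𝕜 ι) :
    (toEuclideanCLM (𝕜 := 𝕜) A).reApplyInnerSelf x ≤
      (toEuclideanCLM (𝕜 := 𝕜) B).reApplyInnerSelf x := by
  have hpos := (isPositive_toEuclideanLin_iff.mpr (le_iff.mp hAB)).re_inner_nonneg_left x
  rwa [map_sub, LinearMap.sub_apply, inner_sub_left, map_sub, sub_nonneg] at hpos

theorem reApplyInnerSelf_toEuclideanCLM_smul_one [DecidableEq ι] (s : ℝ)
    (x : EuclideanSpace 𝕜 ι) :
    (toEuclideanCLM (𝕜 := 𝕜) (s • (1 : Matrix ι ι 𝕜))).reApplyInnerSelf x = s * ‖x‖ ^ 2 := by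
  rw [RCLike.real_smul_eq_coe_smul (K := 𝕜), map_smul, map_one,
    ContinuousLinearMap.reApplyInnerSelf_apply, _root_.smul_apply,
    one_apply_eq_self, inner_smul_left, RCLike.conj_ofReal, RCLike.re_ofReal_mul,
    inner_self_eq_norm_sq]

theorem l2_opNorm_le_of_neg_smul_one_le_of_le_smul_one [DecidableEq ι] {A : Matrix ι ι 𝕜} {s : ℝ}
    (hs : 0 ≤ s) (hlower : (-s) • 1 ≤ A) (hupper : A ≤ s • 1) : ‖A‖ ≤ s := by
  have hA : A.IsHermitian :=
    IsSelfAdjoint.of_ge hlower (IsSelfAdjoint.smul (IsSelfAdjoint.all _) (.one _))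
  have hsymm : (toEuclideanCLM (𝕜 := 𝕜) A).IsSymmetric := isSymmetric_toEuclideanLin_iff.mpr hA
  rw [cstar_norm_def]
  refine norm_le_of_abs_reApplyInnerSelf_le hsymm hs fun x => abs_le.mpr ⟨?_, ?_⟩
  · simpa only [reApplyInnerSelf_toEuclideanCLM_smul_one, neg_mul] using
      reApplyInnerSelf_toEuclideanCLM_mono hlower x
  · simpa only [reApplyInnerSelf_toEuclideanCLM_smul_one] using
      reApplyInnerSelf_toEuclideanCLM_mono hupper x

theorem toBlocks₁₁_mono {M N : Matrix (m ⊕ n) (m ⊕ n) 𝕜} (h : M ≤ N) :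
    M.toBlocks₁₁ ≤ N.toBlocks₁₁ :=
  (le_iff.mp h).submatrix Sum.inl

theorem toBlocks₂₂_mono {M N : Matrix (m ⊕ n) (m ⊕ n) 𝕜} (h : M ≤ N) :
    M.toBlocks₂₂ ≤ N.toBlocks₂₂ :=
  (le_iff.mp h).submatrix Sum.inr

theorem l2_opNorm_le_of_fromBlocks_diagonal_le [Fintype m] [DecidableEq m] [Fintype n]
    [DecidableEq n] {X A : Matrix m m 𝕜} {Y D : Matrix n n 𝕜} {B : Matrix m n 𝕜}
    {C : Matrix n m 𝕜} {s : ℝ} (hs : 0 ≤ s) (hA : A ≤ s • 1) (hD : D ≤ s • 1)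
    (hlower : (-s) • 1 ≤ fromBlocks X 0 0 Y)
    (hupper : fromBlocks X 0 0 Y ≤ fromBlocks A B C D) : ‖X‖ ≤ s ∧ ‖Y‖ ≤ s := by
  rw [← fromBlocks_one, fromBlocks_smul] at hlower
  exact ⟨l2_opNorm_le_of_neg_smul_one_le_of_le_smul_one hs (toBlocks₁₁_mono hlower)
      ((toBlocks₁₁_mono hupper).trans hA),
    l2_opNorm_le_of_neg_smul_one_le_of_le_smul_one hs (toBlocks₂₂_mono hlower)
      ((toBlocks₂₂_mono hupper).trans hD)⟩

theorem matrix_estimate_holder_step_general [DecidableEq ι]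
    {P Z : Matrix ι ι 𝕜} (hP : IsStarProjection P) {L₁ δ κ ε : ℝ} (hL₁ : 0 < L₁) (hδ : 0 < δ)
    (hκ : κ ≤ 7 / 3) (hZ : Z = (L₁ * δ ^ (κ - 2)) • ((κ - 1) • P + (1 - P)))
    (hε : ε = δ ^ (2 - κ) / (2 * L₁)) :
    IsUnit (1 - ε • Z) ∧
    (1 - ε • Z)⁻¹ * Z =
      (L₁ * δ ^ (κ - 2)) • ((2 * (κ - 1) / (3 - κ)) • P + (2 : ℝ) • (1 - P)) ∧
    ∀ X Y : Matrix ι ι 𝕜,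
      (fromBlocks X 0 0 (-Y) + (2 / ε) • (1 : Matrix (ι ⊕ ι) (ι ⊕ ι) 𝕜)).PosSemidef →
      (fromBlocks ((1 - ε • Z)⁻¹ * Z) (-((1 - ε • Z)⁻¹ * Z)) (-((1 - ε • Z)⁻¹ * Z))
          ((1 - ε • Z)⁻¹ * Z) - fromBlocks X 0 0 (-Y)).PosSemidef →
      ‖X‖ ≤ 4 * L₁ * δ ^ (κ - 2) ∧ ‖Y‖ ≤ 4 * L₁ * δ ^ (κ - 2) := by
  have hc : 0 < L₁ * δ ^ (κ - 2) := by positivity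
  have hεc : ε * (L₁ * δ ^ (κ - 2)) = 1 / 2 := by
    rw [hε, ← neg_sub κ, Real.rpow_neg hδ.le]
    field_simp
  rw [mul_assoc 4]
  generalize L₁ * δ ^ (κ - 2) = c at *
  have hκ_ne : 3 - κ ≠ 0 := by linarith
  have hW : (1 - ε • Z)⁻¹ * Z = c • ((2 * (κ - 1) / (3 - κ)) • P + (2 : ℝ) • (1 - P)) := by
    rw [nonsing_inv_eq_ringInverse, hZ]
    exact inverse_one_sub_smul_mul_self_of_mul_eq_half hP.isIdempotentElem hεc hκ_ne
  have hP_coeff_le : 2 * (κ - 1) / (3 - κ) ≤ 4 :=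
    (two_mul_sub_one_div_three_sub_le_four_iff (by linarith)).mpr hκ
  have hW_le : (1 - ε • Z)⁻¹ * Z ≤ (4 * c) • 1 := by
    rw [hW, mul_comm 4 c, mul_smul]
    exact smul_le_smul_of_nonneg_left (smul_add_smul_one_sub_le_smul_one hP hP_coeff_le
      (by norm_num)) hc.le
  refine ⟨?_, hW, fun X Y hlower hupper => ?_⟩
  · rw [hZ]
    exact isUnit_one_sub_smul_of_mul_eq_half hP.isIdempotentElem hεc hκ_ne
  · have hε_ne : ε ≠ 0 := by rintro rfl; norm_num at hεc
    have h_two_div : 2 / ε = 4 * c := by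
      rw [div_eq_iff hε_ne]
      linear_combination -4 * hεc
    rw [h_two_div, ← sub_neg_eq_add, ← neg_smul] at hlower
    simpa only [norm_neg] using
      l2_opNorm_le_of_fromBlocks_diagonal_le (by positivity) hW_le hW_le hlower hupper

end LoewnerOrder

theorem matrix_estimate_holder_step
    (n : ℕ) (hn : 1 ≤ n) (a : EuclideanSpace ℝ (Fin n)) (ha : ‖a‖ = 1)
    (L₁ δ κ : ℝ) (hL₁ : 0 < L₁) (hδ : 0 < δ) (hκ : κ ∈ Set.Ioo (0 : ℝ) 1)
    (Z : Matrix (Fin n) (Fin n) ℝ)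
    (hZ : Z = (L₁ * δ ^ (κ - 2)) •
      ((κ - 1) • Matrix.vecMulVec (fun i => a i) (fun i => a i) +
        (1 - Matrix.vecMulVec (fun i => a i) (fun i => a i))))
    (ε : ℝ) (hε : ε = δ ^ (2 - κ) / (2 * L₁)) :
    IsUnit ((1 : Matrix (Fin n) (Fin n) ℝ) - ε • Z) ∧
    ((1 : Matrix (Fin n) (Fin n) ℝ) - ε • Z)⁻¹ * Z =
      (L₁ * δ ^ (κ - 2)) •
        ((2 * (κ - 1) / (3 - κ)) • Matrix.vecMulVec (fun i => a i) (fun i => a i) +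
          (2 : ℝ) • ((1 : Matrix (Fin n) (Fin n) ℝ) -
            Matrix.vecMulVec (fun i => a i) (fun i => a i))) ∧
    ∀ X Y : Matrix (Fin n) (Fin n) ℝ, X.IsHermitian → Y.IsHermitian →
      (Matrix.fromBlocks X 0 0 (-Y) +
        (2 / ε) • (1 : Matrix (Fin n ⊕ Fin n) (Fin n ⊕ Fin n) ℝ)).PosSemidef →
      (Matrix.fromBlocks
          (((1 : Matrix (Fin n) (Fin n) ℝ) - ε • Z)⁻¹ * Z)
          (-(((1 : Matrix (Fin n) (Fin n) ℝ) - ε • Z)⁻¹ * Z))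
          (-(((1 : Matrix (Fin n) (Fin n) ℝ) - ε • Z)⁻¹ * Z))
          (((1 : Matrix (Fin n) (Fin n) ℝ) - ε • Z)⁻¹ * Z) -
        Matrix.fromBlocks X 0 0 (-Y)).PosSemidef →
      opNorm X ≤ 4 * L₁ * δ ^ (κ - 2) ∧ opNorm Y ≤ 4 * L₁ * δ ^ (κ - 2) := by
  obtain ⟨hunit, hinv, hnorm⟩ := matrix_estimate_holder_step_general
    (isStarProjection_vecMulVec_star ha) hL₁ hδ (by linarith [hκ.2]) hZ hε
  exact ⟨hunit, hinv, fun X Y _ _ => hnorm X Y⟩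
end

section
/- Let n ≥ 1 and X, Y, Z′ ∈ S(n). Assume that, in the Loewner order on 2n×2n symmetric matrices, [[X,0],[0,−Y]] ≤ [[Z′,−Z′],[−Z′,Z′]]. Then: (i) X ≤ Y (i.e. Y − X is positive semidefinite); (ii) for every a ∈ ℝⁿ, ⟨(X−Y)a, a⟩ ≤ 4⟨Z′a, a⟩; and (iii) if moreover there is a unit vector a ∈ ℝⁿ with ⟨Z′a, a⟩ < 0, then for all 0 < λ ≤ Λ one has M⁺_{λ,Λ}(X−Y) ≤ 4λ·⟨Z′a, a⟩. -/
open Metric Set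
/-!
Testing the block inequality on the vectors `(a, a)` and `(a, -a)` gives `X ≤ Y` and
`X - Y ≤ 4 Z'`. Hence `X - Y ≤ 0`, so only the weight `λ` enters the Pucci operator, which equals
`λ tr (X - Y)`; and the trace of a nonpositive matrix is at most each of its eigenvalues, hence at
most `⟨(X - Y) a, a⟩ ≤ 4 ⟨Z' a, a⟩` for every unit vector `a`.
-/

open scoped Matrix

section BlockMatrices

variable {m R : Type*} [Finite m] [Ring R] [PartialOrder R] [StarRing R]
  {A B C D : Matrix m m R}

theorem posSemidef_add_of_fromBlocks (h : (Matrix.fromBlocks A B C D).PosSemidef) :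
    (A + B + C + D).PosSemidef := by
  classical
  have := Fintype.ofFinite m
  convert h.conjTranspose_mul_mul_same (Matrix.fromRows (1 : Matrix m m R) 1) using 1
  simp only [Matrix.conjTranspose_fromRows_eq_fromCols_conjTranspose, Matrix.conjTranspose_one,
    Matrix.fromCols_mul_fromBlocks, Matrix.fromCols_mul_fromRows, one_mul, mul_one]
  abel

theorem posSemidef_sub_of_fromBlocks (h : (Matrix.fromBlocks A B C D).PosSemidef) :
    (A - B - C + D).PosSemidef := by
  classical
  have := Fintype.ofFinite m
  convert h.conjTranspose_mul_mul_same (Matrix.fromRows (1 : Matrix m m R) (-1)) using 1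
  simp only [Matrix.conjTranspose_fromRows_eq_fromCols_conjTranspose, Matrix.conjTranspose_one,
    Matrix.conjTranspose_neg, Matrix.fromCols_mul_fromBlocks, Matrix.fromCols_mul_fromRows,
    one_mul, mul_one, neg_mul, mul_neg]
  abel

variable {X Y Z : Matrix m m R}

theorem posSemidef_sub_of_block_inequality
    (h : (Matrix.fromBlocks Z (-Z) (-Z) Z - Matrix.fromBlocks X 0 0 (-Y)).PosSemidef) :
    (Y - X).PosSemidef := by
  rw [sub_eq_add_neg, Matrix.fromBlocks_neg, Matrix.fromBlocks_add] at h
  convert posSemidef_add_of_fromBlocks h using 1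
  abel

theorem posSemidef_four_smul_sub_of_block_inequality
    (h : (Matrix.fromBlocks Z (-Z) (-Z) Z - Matrix.fromBlocks X 0 0 (-Y)).PosSemidef) :
    (4 • Z - (X - Y)).PosSemidef := by
  rw [sub_eq_add_neg, Matrix.fromBlocks_neg, Matrix.fromBlocks_add] at h
  convert posSemidef_sub_of_fromBlocks h using 1
  abel

end BlockMatrices

section Trace

open scoped ComplexOrder

variable {ι 𝕜 : Type*} [Fintype ι] [DecidableEq ι] [RCLike 𝕜] {A : Matrix ι ι 𝕜}

theorem posSemidef_smul_one_sub_iff_eigenvalues_le (hA : A.IsHermitian) (c : ℝ) :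
    ((c : 𝕜) • 1 - A).PosSemidef ↔ ∀ i, hA.eigenvalues i ≤ c := by
  have diagonalization : (c : 𝕜) • 1 - A = Unitary.conjStarAlgAut 𝕜 _ hA.eigenvectorUnitary
      (Matrix.diagonal fun i => ((c - hA.eigenvalues i : ℝ) : 𝕜)) := by
    conv_lhs =>
      rw [hA.spectral_theorem, ← map_one (Unitary.conjStarAlgAut 𝕜 _ hA.eigenvectorUnitary),
        ← map_smul, ← map_sub, Matrix.smul_one_eq_diagonal, Matrix.diagonal_sub]
    simp
  rw [diagonalization]
  simp only [Unitary.conjStarAlgAut_apply,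
    Matrix.IsUnit.posSemidef_star_right_conjugate_iff Unitary.isUnit_coe,
    Matrix.posSemidef_diagonal_iff, RCLike.ofReal_nonneg, sub_nonneg]

theorem posSemidef_trace_smul_one_sub (hA : A.PosSemidef) :
    (A.trace • 1 - A).PosSemidef := by
  rw [hA.1.trace_eq_sum_eigenvalues, ← RCLike.ofReal_sum,
    posSemidef_smul_one_sub_iff_eigenvalues_le hA.1]
  exact fun i => Finset.single_le_sum (fun j _ => hA.eigenvalues_nonneg j) (Finset.mem_univ i)

end Trace

theorem mulVec_dotProduct_le_of_posSemidef_sub {ι : Type*} [Fintype ι] {A B : Matrix ι ι ℝ}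
    (h : (B - A).PosSemidef) (a : ι → ℝ) : (A *ᵥ a) ⬝ᵥ a ≤ (B *ᵥ a) ⬝ᵥ a := by
  have nonneg := h.dotProduct_mulVec_nonneg a
  rw [star_trivial, dotProduct_comm, Matrix.sub_mulVec, sub_dotProduct] at nonneg
  exact sub_nonneg.mp nonneg

section Pucci

variable {n : ℕ} {N : Matrix (Fin n) (Fin n) ℝ}

theorem pucciPlus_eq_mul_trace_of_neg_posSemidef (hN : (-N).PosSemidef) (lam Lam : ℝ) :
    pucciPlus lam Lam N = lam * N.trace := by
  have hermitian : N.IsHermitian := by simpa using hN.1.neg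
  have eigenvalues_nonpos : ∀ i, hermitian.eigenvalues i ≤ 0 :=
    (posSemidef_smul_one_sub_iff_eigenvalues_le hermitian 0).mp (by simpa using hN)
  rw [pucciPlus, dif_pos hermitian, hermitian.trace_eq_sum_eigenvalues, Finset.mul_sum]
  exact Finset.sum_congr rfl fun i _ => if_neg (eigenvalues_nonpos i).not_gt

theorem pucciPlus_mul_dotProduct_self_le_of_neg_posSemidef (hN : (-N).PosSemidef) {lam : ℝ}
    (hlam : 0 ≤ lam) (Lam : ℝ) (a : Fin n → ℝ) :
    pucciPlus lam Lam N * (a ⬝ᵥ a) ≤ lam * ((N *ᵥ a) ⬝ᵥ a) := by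
  have trace_smul_one_le : (N - N.trace • (1 : Matrix (Fin n) (Fin n) ℝ)).PosSemidef := by
    simpa [neg_add_eq_sub] using posSemidef_trace_smul_one_sub hN
  have trace_mul_le : N.trace * (a ⬝ᵥ a) ≤ (N *ᵥ a) ⬝ᵥ a := by
    simpa [Matrix.smul_mulVec] using mulVec_dotProduct_le_of_posSemidef_sub trace_smul_one_le a
  rw [pucciPlus_eq_mul_trace_of_neg_posSemidef hN, mul_assoc]
  exact mul_le_mul_of_nonneg_left trace_mul_le hlam

end Pucci

theorem block_inequality_consequences_general {n : ℕ} {X Y Z : Matrix (Fin n) (Fin n) ℝ}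
    (hblock : (Matrix.fromBlocks Z (-Z) (-Z) Z - Matrix.fromBlocks X 0 0 (-Y)).PosSemidef) :
    (Y - X).PosSemidef ∧
    (∀ a : Fin n → ℝ, ((X - Y) *ᵥ a) ⬝ᵥ a ≤ 4 * ((Z *ᵥ a) ⬝ᵥ a)) ∧
    (∀ (a : Fin n → ℝ) (lam Lam : ℝ), 0 ≤ lam →
      pucciPlus lam Lam (X - Y) * (a ⬝ᵥ a) ≤ 4 * lam * ((Z *ᵥ a) ⬝ᵥ a)) := by
  have hXY : (Y - X).PosSemidef := posSemidef_sub_of_block_inequality hblock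
  have quadratic_le (a : Fin n → ℝ) : ((X - Y) *ᵥ a) ⬝ᵥ a ≤ 4 * ((Z *ᵥ a) ⬝ᵥ a) := by
    rw [← Nat.cast_ofNat, ← nsmul_eq_mul, ← smul_dotProduct, ← Matrix.smul_mulVec]
    exact mulVec_dotProduct_le_of_posSemidef_sub
      (posSemidef_four_smul_sub_of_block_inequality hblock) a
  refine ⟨hXY, quadratic_le, fun a lam Lam hlam => ?_⟩
  calc pucciPlus lam Lam (X - Y) * (a ⬝ᵥ a)
      ≤ lam * (((X - Y) *ᵥ a) ⬝ᵥ a) :=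
        pucciPlus_mul_dotProduct_self_le_of_neg_posSemidef (by rwa [neg_sub]) hlam Lam a
    _ ≤ lam * (4 * ((Z *ᵥ a) ⬝ᵥ a)) := mul_le_mul_of_nonneg_left (quadratic_le a) hlam
    _ = 4 * lam * ((Z *ᵥ a) ⬝ᵥ a) := by ring

open scoped Matrix in
theorem block_inequality_consequences
    (n : ℕ) (hn : 1 ≤ n) (X Y Z' : Matrix (Fin n) (Fin n) ℝ)
    (hX : X.IsHermitian) (hY : Y.IsHermitian) (hZ' : Z'.IsHermitian)
    (hblock : (Matrix.fromBlocks Z' (-Z') (-Z') Z' -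
      Matrix.fromBlocks X 0 0 (-Y)).PosSemidef) :
    (Y - X).PosSemidef ∧
    (∀ a : Fin n → ℝ, ((X - Y).mulVec a) ⬝ᵥ a ≤ 4 * ((Z'.mulVec a) ⬝ᵥ a)) ∧
    (∀ a : Fin n → ℝ, a ⬝ᵥ a = 1 → (Z'.mulVec a) ⬝ᵥ a < 0 →
      ∀ lam Lam : ℝ, 0 < lam → lam ≤ Lam →
        pucciPlus lam Lam (X - Y) ≤ 4 * lam * ((Z'.mulVec a) ⬝ᵥ a)) := by
  obtain ⟨hXY, quadratic_le, pucci_le⟩ := block_inequality_consequences_general hblock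
  exact ⟨hXY, quadratic_le, fun a ha _ lam Lam hlam _ => by
    simpa [ha] using pucci_le a lam Lam hlam.le⟩
end
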